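/- Given any d ≥ 2, C_0 ≥ 1 and parameters 0 < τ_1 ≤ τ_2 < 1, there exist constants ε_0 ∈ (0,1) and J_0 ∈ ℕ depending only on these quantities with the following property. For s ∈ (d − ε_0, d), let E ⊆ [0,1]^d be any quasi-regular Borel set equipped with a locally uniformly s-dimensional probability measure μ satisfying C_0^{−1} T^{d−s} ≤ F_μ(T) ≤ C_0 T^{d−s} for all T ≥ 1. Then for every (τ_1, τ_2)-lacunary sequence t_1, …, t_{J_0} ∈ (0,1], at least one of the t_j lies in the distance set Δ(E). -/

import Mathlib

open MeasureTheory Set Metric Filter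
open scoped ENNReal NNReal Topology

noncomputable section

abbrev Euc (d : ℕ) : Type := EuclideanSpace ℝ (Fin d)

/-- The closed unit cube `[0,1]^d`. -/
def unitCube (d : ℕ) : Set (Euc d) := {x | ∀ i, x i ∈ Icc (0:ℝ) 1}

/-- The distance set `Δ(E,F) = {|x-y| : x ∈ E, y ∈ F}`. -/
def distSet {d : ℕ} (E F : Set (Euc d)) : Set ℝ :=
  {t | ∃ x ∈ E, ∃ y ∈ F, dist x y = t}

/-- `Q` is a dyadic cube of side length `l`, i.e. `Q = 2^{-k}(m + [0,1]^d)`. -/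
def IsDyadicCube {d : ℕ} (Q : Set (Euc d)) (l : ℝ) : Prop :=
  ∃ (k : ℤ) (m : Fin d → ℤ), l = (2:ℝ) ^ (-k) ∧
    Q = {x | ∀ i, (m i : ℝ) * (2:ℝ) ^ (-k) ≤ x i ∧ x i ≤ ((m i : ℝ) + 1) * (2:ℝ) ^ (-k)}

/-- The `s`-dimensional dyadic Hausdorff content: the infimum of `∑ ℓ(Q_i)^s` over
countable covers of `E` by dyadic cubes. -/
def dyadicContent {d : ℕ} (s : ℝ) (E : Set (Euc d)) : ℝ≥0∞ :=
  ⨅ (Q : ℕ → Set (Euc d)) (l : ℕ → ℝ) (_ : ∀ i, IsDyadicCube (Q i) (l i))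
    (_ : E ⊆ ⋃ i, Q i), ∑' i, ENNReal.ofReal (l i ^ s)

/-- The Fourier transform `μ̂(ξ) = ∫ e^{-i x·ξ} dμ(x)` of a finite Borel measure. -/
def fourierM {d : ℕ} (μ : Measure (Euc d)) (ξ : Euc d) : ℂ :=
  ∫ x, Complex.exp (-(Complex.I * ((inner ℝ x ξ : ℝ) : ℂ))) ∂μ

/-- The partial `L²`-Fourier integral `F_μ(T) = ∫_{|ξ| ≤ T} |μ̂(ξ)|² dξ`. -/
def FmuInt {d : ℕ} (μ : Measure (Euc d)) (T : ℝ) : ℝ :=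
  ∫ ξ in {ξ : Euc d | ‖ξ‖ ≤ T}, ‖fourierM μ ξ‖ ^ 2

/-- `μ` is locally uniformly `s`-dimensional: `μ(Q) ≤ C ℓ(Q)^s` for all cubes
`Q ⊆ [0,1]^d`. -/
def LocallyUniformlyDim {d : ℕ} (μ : Measure (Euc d)) (s : ℝ) : Prop :=
  ∃ C : ℝ, 0 < C ∧ ∀ (x : Euc d) (l : ℝ), 0 ≤ l →
    {y : Euc d | ∀ i, y i - x i ∈ Icc (0:ℝ) l} ⊆ unitCube d →
    μ {y : Euc d | ∀ i, y i - x i ∈ Icc (0:ℝ) l} ≤ ENNReal.ofReal (C * l ^ s)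

/-- `E` is quasi-regular for the exponent `s`:
`liminf_{r→0+} (2r)^{-s} H^s(E ∩ B(x;r)) ≥ κ` for `H^s`-a.e. `x ∈ E`. -/
def QuasiRegular {d : ℕ} (E : Set (Euc d)) (s : ℝ) : Prop :=
  ∃ κ : ℝ, 0 < κ ∧ ∀ᵐ x ∂(μH[s] : Measure (Euc d)).restrict E,
    ENNReal.ofReal κ ≤ Filter.liminf
      (fun r : ℝ => μH[s] (E ∩ Metric.ball x r) / ENNReal.ofReal ((2 * r) ^ s))
      (nhdsWithin 0 (Ioi 0))

/-!
Write `F(T) = ∫_{|ξ| ≤ T} |ν̂|²` and let `σ` be the uniform measure on the unit sphere. If `ν` lives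
on a compact set with no two points at distance `t`, then the law of `x - y + t θ`, with `x`, `y`
drawn from `ν` and `θ` from `σ`, has no mass near the origin. Its Fourier transform is
`|ν̂(ξ)|² σ̂(tξ)`, so Fourier inversion at the origin gives `∫ |ν̂(ξ)|² σ̂(tξ) dξ = 0`.
Now `Re σ̂ ≥ 1/2` on the unit ball, `|σ̂| ≤ 1` everywhere, and `σ̂(η) = O(|η|^{-1/2})`. If `F` grows
no faster than `T ^ ε` with `ε ≤ 1/4`, the frequencies `|ξ| > M / t` are negligible for `M` large,
and the vanishing integral forces `F(M / t) ≥ (5/4) F(1 / t)`. Every missed distance thus makes `F`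
grow by a factor `5/4` within boundedly many steps of the lacunary sequence, whereas the two-sided
bound with small `ε` only allows `F` to grow by a bounded factor along the whole sequence.

The set `E` is only Borel, so the argument runs on the restriction `ν` of `μ` to a compact subset of
`E` of nearly full measure.
-/

section

open scoped Real RealInnerProductSpace ProbabilityTheory

/-! ### Decay of an oscillatory integral -/

theorem abs_integral_mul_deriv_le_of_deriv_nonpos {a b K : ℝ} {u u' v v' : ℝ → ℝ} (hab : a ≤ b)
    (hu : ∀ x ∈ Icc a b, HasDerivAt u (u' x) x) (hv : ∀ x ∈ Icc a b, HasDerivAt v (v' x) x)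
    (hu' : IntervalIntegrable u' volume a b) (hv' : IntervalIntegrable v' volume a b)
    (hu'_nonpos : ∀ x ∈ Icc a b, u' x ≤ 0) (hub : 0 ≤ u b) (hvK : ∀ x ∈ Icc a b, |v x| ≤ K) :
    |∫ x in a..b, u x * v' x| ≤ 2 * K * u a := by
  rw [← uIcc_of_le hab] at hu hv
  have hftc : ∫ x in a..b, -u' x = u a - u b := by
    rw [intervalIntegral.integral_neg, intervalIntegral.integral_eq_sub_of_hasDerivAt hu hu']
    ring
  have hua : 0 ≤ u a := by
    have : 0 ≤ ∫ x in a..b, -u' x :=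
      intervalIntegral.integral_nonneg hab fun x hx => neg_nonneg.mpr (hu'_nonpos x hx)
    linarith
  have hremainder : |∫ x in a..b, u' x * v x| ≤ K * (u a - u b) := by
    rw [← hftc, ← intervalIntegral.integral_const_mul, ← Real.norm_eq_abs]
    refine intervalIntegral.norm_integral_le_of_norm_le (g := fun x => K * -u' x) hab
      (ae_of_all _ fun x hx => ?_) (hu'.neg.const_mul K)
    have hx' : x ∈ Icc a b := Ioc_subset_Icc_self hx
    rw [norm_mul, Real.norm_of_nonpos (hu'_nonpos x hx'), mul_comm]
    exact mul_le_mul_of_nonneg_right (hvK x hx') (neg_nonneg.mpr (hu'_nonpos x hx'))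
  have hboundary_a : |u a * v a| ≤ K * u a := by
    rw [abs_mul, abs_of_nonneg hua, mul_comm]
    exact mul_le_mul_of_nonneg_right (hvK a (left_mem_Icc.mpr hab)) hua
  have hboundary_b : |u b * v b| ≤ K * u b := by
    rw [abs_mul, abs_of_nonneg hub, mul_comm]
    exact mul_le_mul_of_nonneg_right (hvK b (right_mem_Icc.mpr hab)) hub
  rw [intervalIntegral.integral_mul_deriv_eq_deriv_mul hu hv hu' hv']
  calc |u b * v b - u a * v a - ∫ x in a..b, u' x * v x|
      ≤ |u b * v b| + |u a * v a| + |∫ x in a..b, u' x * v x| :=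
        (abs_sub _ _).trans (by gcongr; exact abs_sub _ _)
    _ ≤ K * u b + K * u a + K * (u a - u b) := by gcongr
    _ = 2 * K * u a := by ring

theorem abs_integral_cos_mul_cos_le_of_pos {y δ : ℝ} (hy : 0 < y) (hδ : 0 < δ)
    (hδ' : δ ≤ π / 2) :
    |∫ φ in δ..π / 2, Real.cos (y * Real.cos φ)| ≤ π / (y * δ) := by
  have hsin {φ : ℝ} (hφ : φ ∈ Icc δ (π / 2)) : 0 < Real.sin φ :=
    Real.sin_pos_of_pos_of_lt_pi (hδ.trans_le hφ.1) (by linarith [hφ.2, Real.pi_pos])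
  have hamplitude : ∀ φ ∈ Icc δ (π / 2), HasDerivAt (fun φ => (Real.sin φ)⁻¹)
      (-Real.cos φ / Real.sin φ ^ 2) φ := fun φ hφ =>
    (Real.hasDerivAt_sin φ).inv (hsin hφ).ne'
  have hphase : ∀ φ ∈ Icc δ (π / 2), HasDerivAt (fun φ => -(Real.sin (y * Real.cos φ) / y))
      (Real.sin φ * Real.cos (y * Real.cos φ)) φ := fun φ _ => by
    refine ((((Real.hasDerivAt_cos φ).const_mul y).sin).div_const y).neg.congr_deriv ?_
    field_simp
  have hcont : ContinuousOn (fun φ => -Real.cos φ / Real.sin φ ^ 2) (uIcc δ (π / 2)) := by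
    rw [uIcc_of_le hδ']
    exact ContinuousOn.div (by fun_prop) (by fun_prop) fun φ hφ => (pow_pos (hsin hφ) 2).ne'
  have hibp := abs_integral_mul_deriv_le_of_deriv_nonpos (K := y⁻¹) hδ' hamplitude hphase
    hcont.intervalIntegrable (Continuous.intervalIntegrable (by fun_prop) _ _)
    (fun φ hφ => div_nonpos_of_nonpos_of_nonneg (neg_nonpos.mpr
      (Real.cos_nonneg_of_mem_Icc ⟨by linarith [hφ.1], hφ.2⟩)) (sq_nonneg _))
    (inv_nonneg.mpr (hsin (right_mem_Icc.mpr hδ')).le)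
    (fun φ _ => by
      rw [abs_neg, abs_div, abs_of_pos hy, inv_eq_one_div]
      gcongr
      exact Real.abs_sin_le_one _)
  calc |∫ φ in δ..π / 2, Real.cos (y * Real.cos φ)|
      = |∫ φ in δ..π / 2, (Real.sin φ)⁻¹ * (Real.sin φ * Real.cos (y * Real.cos φ))| := by
        congr 1
        refine intervalIntegral.integral_congr fun φ hφ => ?_
        rw [uIcc_of_le hδ'] at hφ
        exact (inv_mul_cancel_left₀ (hsin hφ).ne' _).symm
    _ ≤ 2 * y⁻¹ * (Real.sin δ)⁻¹ := hibp
    _ ≤ 2 * y⁻¹ * (2 / π * δ)⁻¹ := by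
        gcongr
        exact Real.mul_le_sin hδ.le hδ'
    _ = π / (y * δ) := by field_simp

theorem abs_integral_cos_mul_cos_le {y : ℝ} (hy : 0 < y) :
    |∫ φ in (0 : ℝ)..π / 2, Real.cos (y * Real.cos φ)| ≤ 5 * y ^ (-(1 / 2) : ℝ) := by
  have hinit {a : ℝ} (ha : 0 ≤ a) : |∫ φ in (0 : ℝ)..a, Real.cos (y * Real.cos φ)| ≤ a := by
    simpa [abs_of_nonneg ha] using intervalIntegral.norm_integral_le_of_norm_le_const
      (a := 0) (b := a) (f := fun φ => Real.cos (y * Real.cos φ)) fun φ _ => Real.abs_cos_le_one _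
  have hpi := Real.pi_lt_four
  have hpi' := Real.pi_gt_three
  set δ : ℝ := y ^ (-(1 / 2) : ℝ) with hδ
  rcases lt_or_ge y 1 with hy1 | hy1
  · have : 1 ≤ δ := Real.one_le_rpow_of_pos_of_le_one_of_nonpos hy hy1.le (by norm_num)
    linarith [hinit (a := π / 2) (by positivity)]
  · have hδ0 : 0 < δ := by positivity
    have hδ1 : δ ≤ 1 := Real.rpow_le_one_of_one_le_of_nonpos hy1 (by norm_num)
    have hyδ : y * δ = δ⁻¹ := by
      rw [hδ, ← Real.rpow_neg hy.le, ← Real.rpow_one_add' hy.le (by norm_num)]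
      norm_num
    have hcont : Continuous fun φ => Real.cos (y * Real.cos φ) := by fun_prop
    rw [← intervalIntegral.integral_add_adjacent_intervals (b := δ)
      (hcont.intervalIntegrable _ _) (hcont.intervalIntegrable _ _)]
    calc _ ≤ δ + π / (y * δ) := (abs_add_le _ _).trans
          (add_le_add (hinit hδ0.le) (abs_integral_cos_mul_cos_le_of_pos hy hδ0 (by linarith)))
      _ = (1 + π) * δ := by rw [hyδ, div_inv_eq_mul]; ring
      _ ≤ 5 * δ := by gcongr; linarith

theorem integral_cexp_mul_cos_mul_I (y : ℝ) :
    ∫ φ in (0 : ℝ)..2 * π, Complex.exp (((y * Real.cos φ : ℝ) : ℂ) * Complex.I) =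
      ((4 * ∫ φ in (0 : ℝ)..π / 2, Real.cos (y * Real.cos φ) : ℝ) : ℂ) := by
  have hcontC : Continuous fun φ : ℝ => Complex.exp (((y * Real.cos φ : ℝ) : ℂ) * Complex.I) := by
    fun_prop
  have hcont : Continuous fun φ : ℝ => Real.cos (y * Real.cos φ) := by fun_prop
  have hsecond : ∫ φ in π..2 * π, Complex.exp (((y * Real.cos φ : ℝ) : ℂ) * Complex.I) =
      ∫ φ in (0 : ℝ)..π, Complex.exp ((-(y * Real.cos φ) : ℝ) * Complex.I) := by
    have := intervalIntegral.integral_comp_add_right (a := 0) (b := π)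
      (fun φ => Complex.exp (((y * Real.cos φ : ℝ) : ℂ) * Complex.I)) π
    rw [zero_add, ← two_mul] at this
    rw [← this]
    simp only [Real.cos_add_pi, mul_neg]
  have hquarter : ∫ φ in π / 2..π, Real.cos (y * Real.cos φ) =
      ∫ φ in (0 : ℝ)..π / 2, Real.cos (y * Real.cos φ) := by
    have := intervalIntegral.integral_comp_sub_left (a := 0) (b := π / 2)
      (fun φ => Real.cos (y * Real.cos φ)) π
    rw [sub_zero, sub_half] at this
    simp [← this, Real.cos_pi_sub]
  rw [← intervalIntegral.integral_add_adjacent_intervals (b := π)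
    (hcontC.intervalIntegrable _ _) (hcontC.intervalIntegrable _ _), hsecond,
    ← intervalIntegral.integral_add (hcontC.intervalIntegrable _ _)
      (Continuous.intervalIntegrable (by fun_prop) _ _)]
  calc _ = ∫ φ in (0 : ℝ)..π, ((2 * Real.cos (y * Real.cos φ) : ℝ) : ℂ) := by
        congr 1 with φ
        push_cast [Complex.two_cos]
        rfl
    _ = ((2 * ∫ φ in (0 : ℝ)..π, Real.cos (y * Real.cos φ) : ℝ) : ℂ) := by
        rw [intervalIntegral.integral_ofReal, intervalIntegral.integral_const_mul]
    _ = _ := by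
        rw [← intervalIntegral.integral_add_adjacent_intervals (b := π / 2)
          (hcont.intervalIntegrable _ _) (hcont.intervalIntegrable _ _), hquarter]
        congr 1
        ring

theorem norm_integral_cexp_cos_add_sin_le {r p : ℝ} (q : ℝ) (hr : 0 < r) (hp : p ≠ 0) :
    ‖∫ φ in (0 : ℝ)..2 * π,
      Complex.exp (((r * (Real.cos φ * p + Real.sin φ * q) : ℝ) : ℂ) * Complex.I)‖ ≤
      20 * r ^ (-(1 / 2) : ℝ) * |p| ^ (-(1 / 2) : ℝ) := by
  let z : ℂ := ⟨p, q⟩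
  have hpz : |p| ≤ ‖z‖ := Complex.abs_re_le_norm z
  have hp0 : 0 < |p| := abs_pos.mpr hp
  have hy : 0 < r * ‖z‖ := mul_pos hr (hp0.trans_le hpz)
  have hphase (φ : ℝ) : r * (Real.cos φ * p + Real.sin φ * q) =
      r * ‖z‖ * Real.cos (φ - z.arg) := by
    rw [Real.cos_sub]
    linear_combination -r * Real.cos φ * Complex.norm_mul_cos_arg z -
      r * Real.sin φ * Complex.norm_mul_sin_arg z
  have hper : Function.Periodic
      (fun φ : ℝ => Complex.exp (((r * ‖z‖ * Real.cos φ : ℝ) : ℂ) * Complex.I)) (2 * π) :=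
    fun φ => by simp only [Real.cos_add_two_pi]
  have hshift := hper.intervalIntegral_add_eq (0 - z.arg) 0
  rw [sub_add_eq_add_sub, zero_add] at hshift
  simp_rw [hphase]
  rw [intervalIntegral.integral_comp_sub_right
    (fun φ => Complex.exp (((r * ‖z‖ * Real.cos φ : ℝ) : ℂ) * Complex.I)), hshift,
    integral_cexp_mul_cos_mul_I, Complex.norm_real, norm_mul, Real.norm_ofNat]
  calc _ ≤ 4 * (5 * (r * ‖z‖) ^ (-(1 / 2) : ℝ)) := by
        gcongr
        exact abs_integral_cos_mul_cos_le hy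
    _ ≤ 4 * (5 * (r * |p|) ^ (-(1 / 2) : ℝ)) := by
        gcongr 4 * (5 * ?_)
        exact Real.rpow_le_rpow_of_nonpos (by positivity) (by gcongr) (by norm_num)
    _ = 20 * r ^ (-(1 / 2) : ℝ) * |p| ^ (-(1 / 2) : ℝ) := by
        rw [Real.mul_rpow hr.le hp0.le]
        ring

theorem integrableOn_Icc_abs_rpow {a : ℝ} (ha : -1 < a) :
    IntegrableOn (fun x : ℝ => |x| ^ a) (Icc (-1) 1) := by
  rw [integrableOn_Icc_iff_integrableOn_Ioc,
    ← intervalIntegrable_iff_integrableOn_Ioc_of_le (by norm_num)]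
  refine intervalIntegrable_of_even (fun x => by rw [abs_neg]) fun x hx => ?_
  refine (intervalIntegral.intervalIntegrable_rpow' ha).congr fun y hy => ?_
  rw [uIoc_of_le hx.le] at hy
  rw [abs_of_pos hy.1]

/-! ### The uniform measure on the sphere -/

variable {V : Type*} [NormedAddCommGroup V] [InnerProductSpace ℝ V]

theorem norm_smul_cos_smul_add_sin_smul {e f : V} (he : ‖e‖ = 1) (hf : ‖f‖ = 1)
    (hef : ⟪e, f⟫ = 0) {r : ℝ} (hr : 0 ≤ r) (φ : ℝ) :
    ‖r • (Real.cos φ • e + Real.sin φ • f)‖ = r := by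
  have hunit : ‖Real.cos φ • e + Real.sin φ • f‖ ^ 2 = 1 := by
    simp [norm_add_sq_real, norm_smul, inner_smul_left, inner_smul_right, he, hf, hef]
  rw [norm_smul, Real.norm_of_nonneg hr,
    (pow_eq_one_iff_of_nonneg (norm_nonneg _) two_ne_zero).mp hunit, mul_one]

variable [MeasurableSpace V] [BorelSpace V]

theorem re_charFun (μ : Measure V) [IsFiniteMeasure μ] (ξ : V) :
    (charFun μ ξ).re = ∫ x, Real.cos ⟪x, ξ⟫ ∂μ := by
  have hint : Integrable (fun x => Complex.exp (⟪x, ξ⟫ * Complex.I)) μ :=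
    Integrable.of_bound (Continuous.aestronglyMeasurable (by fun_prop)) 1
      (ae_of_all _ fun x => (Complex.norm_exp_ofReal_mul_I _).le)
  rw [charFun_apply, ← RCLike.re_eq_complex_re, ← integral_re hint]
  simp only [RCLike.re_eq_complex_re, Complex.exp_ofReal_mul_I_re]

variable [FiniteDimensional ℝ V]

theorem integrableOn_ball_abs_inner_rpow {ι : Type*} [Fintype ι] (b : OrthonormalBasis ι ℝ V)
    (i : ι) {a : ℝ} (ha : -1 < a) :
    IntegrableOn (fun x => |⟪b i, x⟫| ^ a) (ball (0 : V) 1) := by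
  classical
  let f : ι → ℝ → ℝ := fun j => (Icc (-1 : ℝ) 1).indicator fun y => if j = i then |y| ^ a else 1
  have hf (j : ι) : Integrable (f j) := by
    refine (integrable_indicator_iff measurableSet_Icc).mpr ?_
    by_cases hj : j = i
    · simpa only [hj, if_true] using integrableOn_Icc_abs_rpow ha
    · simp [hj]
  have hprod : Integrable fun x : V => ∏ j, f j (b.repr x j) :=
    (((PiLp.volume_preserving_ofLp ι).comp b.measurePreserving_repr).integrable_comp
      (Integrable.fintype_prod hf).aestronglyMeasurable).mpr (Integrable.fintype_prod hf)
  refine hprod.integrableOn.congr_fun (fun x hx => ?_) measurableSet_ball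
  have hcoord (j : ι) : ⟪b j, x⟫ ∈ Icc (-1 : ℝ) 1 := by
    rw [mem_Icc, ← abs_le]
    have := abs_real_inner_le_norm (b j) x
    rw [b.norm_eq_one, one_mul] at this
    exact this.trans (mem_ball_zero_iff.mp hx).le
  simp only [f, b.repr_apply_apply, indicator_of_mem (hcoord _), Finset.prod_ite_eq',
    Finset.mem_univ, if_true]

/-- The uniform probability measure on the unit sphere of `V`, realised as a measure on `V`: the
radial projection of the uniform measure on the unit ball. -/
def sphereMeasure (V : Type*) [NormedAddCommGroup V] [InnerProductSpace ℝ V]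
    [FiniteDimensional ℝ V] [MeasurableSpace V] [BorelSpace V] : Measure V :=
  volume[|ball (0 : V) 1].map NormedSpace.normalize

theorem measurable_normalize : Measurable (NormedSpace.normalize : V → V) := by
  unfold NormedSpace.normalize
  fun_prop

instance isProbabilityMeasure_sphereMeasure : IsProbabilityMeasure (sphereMeasure V) :=
  have := ProbabilityTheory.cond_isProbabilityMeasure_of_finite
    (measure_ball_pos volume (0 : V) one_pos).ne' measure_ball_lt_top.ne
  Measure.isProbabilityMeasure_map measurable_normalize.aemeasurable

theorem ae_sphereMeasure_of_ae {p : V → Prop} (hp : MeasurableSet {x | p x})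
    (h : ∀ᵐ x ∂(volume : Measure V), p (NormedSpace.normalize x)) : ∀ᵐ x ∂sphereMeasure V, p x :=
  (ae_map_iff measurable_normalize.aemeasurable hp).mpr
    (ProbabilityTheory.cond_absolutelyContinuous.ae_le h)

theorem ae_norm_eq_one_sphereMeasure [Nontrivial V] : ∀ᵐ x ∂sphereMeasure V, ‖x‖ = 1 :=
  ae_sphereMeasure_of_ae (measurableSet_eq_fun (by fun_prop) (by fun_prop)) <| by
    filter_upwards [Measure.ae_ne volume (0 : V)] with x hx
    exact NormedSpace.norm_normalize hx

theorem ae_inner_ne_zero_sphereMeasure {e : V} (he : e ≠ 0) :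
    ∀ᵐ x ∂sphereMeasure V, ⟪e, x⟫ ≠ 0 :=
  ae_sphereMeasure_of_ae (measurableSet_eq_fun (by fun_prop) (by fun_prop)).compl <| by
    have hnull : volume ((ℝ ∙ e)ᗮ : Set V) = 0 := by
      refine Measure.addHaar_submodule _ _ fun htop => he ?_
      rwa [Submodule.orthogonal_eq_top_iff, Submodule.span_singleton_eq_bot] at htop
    filter_upwards [measure_eq_zero_iff_ae_notMem.mp hnull] with x hx
    rw [SetLike.mem_coe, Submodule.mem_orthogonal_singleton_iff_inner_right] at hx
    have hx0 : x ≠ 0 := by rintro rfl; simp at hx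
    rw [NormedSpace.normalize, inner_smul_right]
    exact mul_ne_zero (inv_ne_zero (norm_ne_zero_iff.mpr hx0)) hx

theorem integrable_abs_inner_rpow_sphereMeasure {ι : Type*} [Fintype ι]
    (b : OrthonormalBasis ι ℝ V) (i : ι) {a : ℝ} (ha : -1 < a) (ha0 : a ≤ 0) :
    Integrable (fun x => |⟪b i, x⟫| ^ a) (sphereMeasure V) := by
  have hmeas : Measurable fun x => |⟪b i, x⟫| ^ a := by fun_prop
  refine (integrable_map_measure hmeas.aestronglyMeasurable
    measurable_normalize.aemeasurable).mpr ?_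
  refine Integrable.smul_measure ?_ (ENNReal.inv_ne_top.mpr (measure_ball_pos _ _ one_pos).ne')
  refine (integrableOn_ball_abs_inner_rpow b i ha).mono'
    (hmeas.comp measurable_normalize).aestronglyMeasurable ?_
  filter_upwards [ae_restrict_mem measurableSet_ball] with x hx
  have hinner : ⟪b i, NormedSpace.normalize x⟫ = ‖x‖⁻¹ * ⟪b i, x⟫ := inner_smul_right _ _ _
  rw [Function.comp_apply, Real.norm_of_nonneg (by positivity), hinner]
  rcases eq_or_ne ⟪b i, x⟫ 0 with h0 | h0
  · rw [h0, mul_zero]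
  have hx0 : 0 < ‖x‖ := norm_pos_iff.mpr fun hx0 => h0 (by rw [hx0, inner_zero_right])
  refine Real.rpow_le_rpow_of_nonpos (abs_pos.mpr h0) ?_ ha0
  rw [abs_mul, abs_inv, abs_norm]
  exact le_mul_of_one_le_left (abs_nonneg _)
    (one_le_inv_iff₀.mpr ⟨hx0, (mem_ball_zero_iff.mp hx).le⟩)

theorem map_sphereMeasure_linearIsometryEquiv (L : V ≃ₗᵢ[ℝ] V) :
    (sphereMeasure V).map L = sphereMeasure V := by
  have hball : volume[|ball (0 : V) 1].map L = volume[|ball (0 : V) 1] := by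
    rw [ProbabilityTheory.cond, Measure.map_smul]
    congr 1
    have h := L.measurePreserving.restrict_preimage (measurableSet_ball (x := 0) (ε := 1))
    have hpre : L ⁻¹' ball 0 1 = ball 0 1 := by simp
    rw [hpre] at h
    exact h.map_eq
  have hcomm : L ∘ NormedSpace.normalize = NormedSpace.normalize ∘ L := by
    ext x
    simp [NormedSpace.normalize]
  rw [sphereMeasure, Measure.map_map (by fun_prop) measurable_normalize, hcomm,
    ← Measure.map_map measurable_normalize (by fun_prop), hball]

theorem charFun_sphereMeasure_eq_of_norm_eq {v w : V} (h : ‖v‖ = ‖w‖) :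
    charFun (sphereMeasure V) v = charFun (sphereMeasure V) w := by
  let L : V ≃ₗᵢ[ℝ] V := (ℝ ∙ (v - w))ᗮ.reflection
  have hL : L v = w := Submodule.reflection_sub h
  rw [← hL, ← map_sphereMeasure_linearIsometryEquiv L, charFun_apply (t := L v),
    integral_map (by fun_prop) (Continuous.aestronglyMeasurable (by fun_prop))]
  simp_rw [L.inner_map_map]
  rw [map_sphereMeasure_linearIsometryEquiv, charFun_apply]

-- Averages the rotation invariant `σ̂` over the circle of radius `‖η‖` in the plane of `e`, `f`.
theorem two_pi_mul_charFun_sphereMeasure {e f : V} (he : ‖e‖ = 1) (hf : ‖f‖ = 1)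
    (hef : ⟪e, f⟫ = 0) (η : V) :
    ((2 * π : ℝ) : ℂ) * charFun (sphereMeasure V) η = ∫ x, (∫ φ in (0 : ℝ)..2 * π,
      Complex.exp (((‖η‖ * (Real.cos φ * ⟪e, x⟫ + Real.sin φ * ⟪f, x⟫) : ℝ) : ℂ) * Complex.I))
      ∂sphereMeasure V := by
  have hrotate (φ : ℝ) : charFun (sphereMeasure V) η = ∫ x, Complex.exp
      (((‖η‖ * (Real.cos φ * ⟪e, x⟫ + Real.sin φ * ⟪f, x⟫) : ℝ) : ℂ) * Complex.I)
      ∂sphereMeasure V := by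
    rw [charFun_sphereMeasure_eq_of_norm_eq
      (norm_smul_cos_smul_add_sin_smul he hf hef (norm_nonneg η) φ).symm, charFun_apply]
    simp only [inner_smul_right, inner_add_right, real_inner_comm]
  have hconst : ((2 * π : ℝ) : ℂ) * charFun (sphereMeasure V) η =
      ∫ _ in (0 : ℝ)..2 * π, charFun (sphereMeasure V) η := by simp
  rw [hconst, intervalIntegral.integral_congr fun φ _ => hrotate φ]
  simp only [intervalIntegral.integral_of_le (show (0 : ℝ) ≤ 2 * π by positivity)]
  refine integral_integral_swap (Integrable.of_bound (Continuous.aestronglyMeasurable ?_) 1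
    (ae_of_all _ fun p => (Complex.norm_exp_ofReal_mul_I _).le))
  simp only [Function.uncurry_def]
  fun_prop

theorem exists_norm_charFun_sphereMeasure_le (hV : 2 ≤ Module.finrank ℝ V) :
    ∃ A : ℝ, 0 ≤ A ∧ ∀ η : V, η ≠ 0 →
      ‖charFun (sphereMeasure V) η‖ ≤ A * ‖η‖ ^ (-(1 / 2) : ℝ) := by
  let b := stdOrthonormalBasis ℝ V
  let e := b ⟨0, by lia⟩
  let f := b ⟨1, by lia⟩
  have he : ‖e‖ = 1 := b.norm_eq_one _
  have hef : ⟪e, f⟫ = 0 := b.inner_eq_zero (by simp)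
  have hint : Integrable (fun x => |⟪e, x⟫| ^ (-(1 / 2) : ℝ)) (sphereMeasure V) :=
    integrable_abs_inner_rpow_sphereMeasure b _ (by norm_num) (by norm_num)
  refine ⟨20 * (∫ x, |⟪e, x⟫| ^ (-(1 / 2) : ℝ) ∂sphereMeasure V) / (2 * π), by positivity,
    fun η hη => ?_⟩
  have haverage : ‖((2 * π : ℝ) : ℂ) * charFun (sphereMeasure V) η‖ ≤
      20 * ‖η‖ ^ (-(1 / 2) : ℝ) * ∫ x, |⟪e, x⟫| ^ (-(1 / 2) : ℝ) ∂sphereMeasure V := by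
    rw [two_pi_mul_charFun_sphereMeasure he (b.norm_eq_one _) hef, ← integral_const_mul]
    refine norm_integral_le_of_norm_le (hint.const_mul _) ?_
    filter_upwards [ae_inner_ne_zero_sphereMeasure (e := e) (by simp [← norm_ne_zero_iff, he])]
      with x hx
    exact norm_integral_cexp_cos_add_sin_le _ (norm_pos_iff.mpr hη) hx
  rw [norm_mul, Complex.norm_real, Real.norm_of_nonneg (by positivity)] at haverage
  rw [div_mul_eq_mul_div, le_div_iff₀' (by positivity)]
  linarith

theorem half_le_re_charFun_sphereMeasure [Nontrivial V] {η : V} (hη : ‖η‖ ≤ 1) :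
    1 / 2 ≤ (charFun (sphereMeasure V) η).re := by
  rw [re_charFun]
  calc (1 / 2 : ℝ) = ∫ _, (1 / 2 : ℝ) ∂sphereMeasure V := by simp
    _ ≤ ∫ x, Real.cos ⟪x, η⟫ ∂sphereMeasure V := by
      refine integral_mono_ae (integrable_const _) ?_ ?_
      · exact Integrable.of_bound (Continuous.aestronglyMeasurable (by fun_prop)) 1
          (ae_of_all _ fun x => Real.abs_cos_le_one _)
      filter_upwards [ae_norm_eq_one_sphereMeasure] with x hx
      have hinner : |⟪x, η⟫| ≤ 1 := (abs_real_inner_le_norm x η).trans (by rwa [hx, one_mul])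
      have hsq : ⟪x, η⟫ ^ 2 ≤ 1 := (sq_le_one_iff_abs_le_one _).mpr hinner
      linarith [Real.one_sub_sq_div_two_le_cos (x := ⟪x, η⟫)]

/-! ### Fourier inversion away from the support -/

/-- The law of `x - y` for independent `x` and `y` of law `μ`. It carries the distances between
points of the support of `μ`, and its characteristic function is `|μ̂|²`. -/
def autocorrelation (μ : Measure V) : Measure V := (μ.prod μ).map fun p => p.1 - p.2

instance isFiniteMeasure_autocorrelation (μ : Measure V) [IsFiniteMeasure μ] :
    IsFiniteMeasure (autocorrelation μ) :=
  Measure.isFiniteMeasure_map _ _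

theorem autocorrelation_mono {μ ν : Measure V} [SFinite ν] (h : μ ≤ ν) :
    autocorrelation μ ≤ autocorrelation ν :=
  Measure.map_mono (Measure.prod_mono h h) (by fun_prop)

theorem charFun_autocorrelation (μ : Measure V) [SFinite μ] (ξ : V) :
    charFun (autocorrelation μ) ξ = ((‖charFun μ ξ‖ ^ 2 : ℝ) : ℂ) := by
  calc charFun (autocorrelation μ) ξ
      = ∫ p, Complex.exp (⟪p.1, ξ⟫ * Complex.I) * Complex.exp (⟪p.2, -ξ⟫ * Complex.I)
          ∂(μ.prod μ) := by
        rw [charFun_apply, autocorrelation, integral_map (by fun_prop) (by fun_prop)]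
        congr 1 with p
        rw [← Complex.exp_add, inner_sub_left, inner_neg_right]
        push_cast
        ring_nf
    _ = charFun μ ξ * charFun μ (-ξ) := by
        rw [charFun_apply, charFun_apply, ← integral_prod_mul]
    _ = ((‖charFun μ ξ‖ ^ 2 : ℝ) : ℂ) := by
        rw [charFun_neg, Complex.mul_conj, Complex.normSq_eq_norm_sq]

theorem ae_autocorrelation {μ : Measure V} [SFinite μ] {K : Set V} {p : V → Prop}
    (hp : MeasurableSet {z | p z}) (hK : ∀ᵐ x ∂μ, x ∈ K)
    (h : ∀ x ∈ K, ∀ y ∈ K, p (x - y)) : ∀ᵐ z ∂autocorrelation μ, p z := by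
  refine (ae_map_iff (by fun_prop) hp).mpr ?_
  filter_upwards [Measure.quasiMeasurePreserving_fst.ae hK,
    Measure.quasiMeasurePreserving_snd.ae hK] with q hfst hsnd using h _ hfst _ hsnd

theorem integrable_exp_neg_norm_sq_div {L : ℝ} (hL : 0 < L) :
    Integrable fun ξ : V => Real.exp (-(‖ξ‖ ^ 2 / L)) := by
  have h := (GaussianFourier.integrable_cexp_neg_mul_sq_norm_add (V := V) (b := (L⁻¹ : ℝ))
    (by simpa using hL) 0 0).norm
  refine h.congr (ae_of_all _ fun ξ => ?_)
  simp only [Complex.norm_exp]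
  norm_cast
  simp [div_eq_inv_mul]

theorem integral_exp_neg_norm_sq_div_mul_cexp {L : ℝ} (hL : 0 < L) (z : V) :
    ∫ ξ : V, (Real.exp (-(‖ξ‖ ^ 2 / L)) : ℂ) * Complex.exp (⟪z, ξ⟫ * Complex.I) =
      (((π * L) ^ (Module.finrank ℝ V / 2 : ℝ) * Real.exp (-(L * ‖z‖ ^ 2 / 4)) : ℝ) : ℂ) := by
  have h := GaussianFourier.integral_cexp_neg_mul_sq_norm_add (V := V) (b := (L⁻¹ : ℝ))
    (by simpa using hL) Complex.I z
  calc _ = ∫ ξ : V, Complex.exp (-((L⁻¹ : ℝ) : ℂ) * ‖ξ‖ ^ 2 + Complex.I * ⟪z, ξ⟫) := by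
        congr 1 with ξ
        rw [Complex.ofReal_exp, ← Complex.exp_add]
        push_cast
        ring_nf
    _ = _ := by
        rw [h, Complex.ofReal_mul, Complex.ofReal_cpow (by positivity), Complex.ofReal_exp]
        push_cast
        rw [div_inv_eq_mul, Complex.I_sq]
        congr 2
        field_simp

theorem integral_charFun_mul_exp_neg_norm_sq_div (θ : Measure V) [IsFiniteMeasure θ] {L : ℝ}
    (hL : 0 < L) :
    ∫ ξ, charFun θ ξ * (Real.exp (-(‖ξ‖ ^ 2 / L)) : ℂ) =
      ((∫ z, (π * L) ^ (Module.finrank ℝ V / 2 : ℝ) * Real.exp (-(L * ‖z‖ ^ 2 / 4))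
        ∂θ : ℝ) : ℂ) := by
  have hgauss : Integrable fun ξ : V => (Real.exp (-(‖ξ‖ ^ 2 / L)) : ℂ) :=
    (integrable_exp_neg_norm_sq_div hL).ofReal
  have hint : Integrable (fun q : V × V => (Real.exp (-(‖q.1‖ ^ 2 / L)) : ℂ) *
      Complex.exp (⟪q.2, q.1⟫ * Complex.I)) (volume.prod θ) :=
    (hgauss.comp_fst θ).mul_bdd (c := 1)
      (by fun_prop) (ae_of_all _ fun q => (Complex.norm_exp_ofReal_mul_I _).le)
  calc _ = ∫ ξ, ∫ z, (Real.exp (-(‖ξ‖ ^ 2 / L)) : ℂ) * Complex.exp (⟪z, ξ⟫ * Complex.I) ∂θ := by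
        simp_rw [integral_const_mul, mul_comm (charFun _ _), charFun_apply]
    _ = ∫ z, (∫ ξ, (Real.exp (-(‖ξ‖ ^ 2 / L)) : ℂ) * Complex.exp (⟪z, ξ⟫ * Complex.I)) ∂θ :=
        integral_integral_swap hint
    _ = _ := by
        simp_rw [integral_exp_neg_norm_sq_div_mul_cexp hL]
        exact integral_ofReal

theorem tendsto_integral_mul_exp_neg_norm_sq_div {f : V → ℂ} (hf : Integrable f) :
    Tendsto (fun L : ℝ => ∫ ξ, f ξ * (Real.exp (-(‖ξ‖ ^ 2 / L)) : ℂ)) atTop (𝓝 (∫ ξ, f ξ)) := by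
  refine tendsto_integral_filter_of_dominated_convergence (fun ξ => ‖f ξ‖) ?_ ?_ hf.norm
    (ae_of_all _ fun ξ => ?_)
  · exact Eventually.of_forall fun L => hf.1.mul (by fun_prop)
  · filter_upwards [eventually_ge_atTop 0] with L hL
    refine ae_of_all _ fun ξ => ?_
    rw [norm_mul, Complex.norm_real, Real.norm_of_nonneg (Real.exp_pos _).le]
    exact mul_le_of_le_one_right (norm_nonneg _)
      (Real.exp_le_one_iff.mpr (neg_nonpos.mpr (by positivity)))
  · have hexp : Tendsto (fun L : ℝ => Real.exp (-(‖ξ‖ ^ 2 / L))) atTop (𝓝 1) := by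
      simpa using (tendsto_const_nhds.div_atTop tendsto_id).neg.rexp
    simpa using ((Complex.continuous_ofReal.tendsto _).comp hexp).const_mul (f ξ)

theorem integral_charFun_eq_zero {θ : Measure V} [IsFiniteMeasure θ] {r : ℝ} (hr : 0 < r)
    (hθ : ∀ᵐ z ∂θ, r ≤ ‖z‖) (hint : Integrable (charFun θ)) : ∫ ξ, charFun θ ξ = 0 := by
  have hdecay : Tendsto (fun L : ℝ => (π * L) ^ (Module.finrank ℝ V / 2 : ℝ) *
      Real.exp (-(L * r ^ 2 / 4)) * θ.real univ) atTop (𝓝 0) := by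
    have h := ((tendsto_rpow_mul_exp_neg_mul_atTop_nhds_zero (Module.finrank ℝ V / 2)
      (r ^ 2 / 4) (by positivity)).const_mul (π ^ (Module.finrank ℝ V / 2 : ℝ))).mul_const
      (θ.real univ)
    rw [mul_zero, zero_mul] at h
    refine h.congr' ?_
    filter_upwards [eventually_ge_atTop 0] with L hL
    rw [Real.mul_rpow Real.pi_pos.le hL]
    ring_nf
  refine tendsto_nhds_unique (tendsto_integral_mul_exp_neg_norm_sq_div hint)
    (squeeze_zero_norm' ?_ hdecay)
  filter_upwards [eventually_gt_atTop 0] with L hL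
  rw [integral_charFun_mul_exp_neg_norm_sq_div θ hL, Complex.norm_real]
  refine norm_integral_le_of_norm_le_const ?_
  filter_upwards [hθ] with z hz
  rw [Real.norm_of_nonneg (by positivity)]
  gcongr

theorem exists_pos_forall_le_abs_dist_sub {X : Type*} [PseudoMetricSpace X] {K : Set X}
    (hK : IsCompact K) {t : ℝ} (ht : ∀ x ∈ K, ∀ y ∈ K, dist x y ≠ t) :
    ∃ r > 0, ∀ x ∈ K, ∀ y ∈ K, r ≤ |dist x y - t| := by
  rcases K.eq_empty_or_nonempty with rfl | hne
  · exact ⟨1, one_pos, by simp⟩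
  obtain ⟨q, hq, hmin⟩ := (hK.prod hK).exists_isMinOn (hne.prod hne)
    (f := fun p : X × X => |dist p.1 p.2 - t|) (by fun_prop)
  exact ⟨_, abs_pos.mpr (sub_ne_zero.mpr (ht _ hq.1 _ hq.2)), fun x hx y hy =>
    isMinOn_iff.mp hmin (x, y) (mk_mem_prod hx hy)⟩

/-! ### The energy measure -/

/-- The measure `|μ̂(ξ)|² dξ`. Its value on the ball of radius `T` about the origin is the partial
`L²`-Fourier integral `F_μ(T)`. -/
def fourierEnergy (μ : Measure V) : Measure V :=
  volume.withDensity fun ξ => ((‖charFun μ ξ‖₊ ^ 2 : ℝ≥0) : ℝ≥0∞)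

theorem measurable_nnnorm_charFun_sq (μ : Measure V) [SFinite μ] :
    Measurable fun ξ => ‖charFun μ ξ‖₊ ^ 2 :=
  measurable_charFun.nnnorm.pow_const 2

theorem fourierEnergy_le (μ : Measure V) [IsFiniteMeasure μ] :
    fourierEnergy μ ≤ μ univ ^ 2 • volume := by
  rw [← withDensity_const]
  refine withDensity_mono (ae_of_all _ fun ξ => ?_)
  have h : ‖charFun μ ξ‖ₑ ≤ μ univ := by
    rw [← ofReal_norm, ← ofReal_measureReal]
    exact ENNReal.ofReal_le_ofReal (norm_charFun_le ξ)
  push_cast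
  gcongr
  exact h

theorem integrable_fourierEnergy_of_integrable {μ : Measure V} [IsFiniteMeasure μ] {F : Type*}
    [NormedAddCommGroup F] {f : V → F} (hf : Integrable f) : Integrable f (fourierEnergy μ) :=
  (hf.smul_measure (ENNReal.pow_ne_top (measure_ne_top μ univ))).mono_measure (fourierEnergy_le μ)

instance isLocallyFiniteMeasure_fourierEnergy (μ : Measure V) [IsFiniteMeasure μ] :
    IsLocallyFiniteMeasure (fourierEnergy μ) :=
  have : IsFiniteMeasureOnCompacts (μ univ ^ 2 • (volume : Measure V)) :=
    ⟨fun _ hK => ENNReal.mul_lt_top (ENNReal.pow_lt_top (measure_lt_top μ univ)) hK.measure_lt_top⟩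
  Measure.isLocallyFiniteMeasure_of_le (fourierEnergy_le μ)

theorem integral_fourierEnergy (μ : Measure V) [SFinite μ] {F : Type*} [NormedAddCommGroup F]
    [NormedSpace ℝ F] (f : V → F) : ∫ ξ, f ξ ∂fourierEnergy μ = ∫ ξ, ‖charFun μ ξ‖ ^ 2 • f ξ := by
  rw [fourierEnergy, integral_withDensity_eq_integral_smul (measurable_nnnorm_charFun_sq μ)]
  rfl

theorem integrable_fourierEnergy_iff {μ : Measure V} [SFinite μ] {F : Type*} [NormedAddCommGroup F]
    [NormedSpace ℝ F] {f : V → F} :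
    Integrable f (fourierEnergy μ) ↔ Integrable fun ξ => ‖charFun μ ξ‖ ^ 2 • f ξ := by
  rw [fourierEnergy, integrable_withDensity_iff_integrable_smul (measurable_nnnorm_charFun_sq μ)]
  rfl

theorem measureReal_fourierEnergy (μ : Measure V) [SFinite μ] {s : Set V} (hs : MeasurableSet s) :
    (fourierEnergy μ).real s = ∫ ξ in s, ‖charFun μ ξ‖ ^ 2 := by
  rw [← setIntegral_one_eq_measureReal, fourierEnergy,
    setIntegral_withDensity_eq_setIntegral_smul (measurable_nnnorm_charFun_sq μ) _ hs]
  simp [NNReal.smul_def]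

theorem integral_exp_neg_norm_sq_div_fourierEnergy (μ : Measure V) [IsFiniteMeasure μ] {L : ℝ}
    (hL : 0 < L) :
    ∫ ξ, Real.exp (-(‖ξ‖ ^ 2 / L)) ∂fourierEnergy μ =
      ∫ z, (π * L) ^ (Module.finrank ℝ V / 2 : ℝ) * Real.exp (-(L * ‖z‖ ^ 2 / 4))
        ∂autocorrelation μ := by
  rw [integral_fourierEnergy, ← Complex.ofReal_inj,
    ← integral_charFun_mul_exp_neg_norm_sq_div _ hL, ← integral_complex_ofReal]
  simp only [charFun_autocorrelation, smul_eq_mul, Complex.ofReal_mul]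

-- Unlike the energy of a ball, the Gaussian energy is monotone in the measure: on the physical side
-- it integrates a positive function.
theorem integral_exp_neg_norm_sq_div_fourierEnergy_mono {ν μ : Measure V} [IsFiniteMeasure ν]
    [IsFiniteMeasure μ] (h : ν ≤ μ) {L : ℝ} (hL : 0 < L) :
    ∫ ξ, Real.exp (-(‖ξ‖ ^ 2 / L)) ∂fourierEnergy ν ≤
      ∫ ξ, Real.exp (-(‖ξ‖ ^ 2 / L)) ∂fourierEnergy μ := by
  rw [integral_exp_neg_norm_sq_div_fourierEnergy ν hL,
    integral_exp_neg_norm_sq_div_fourierEnergy μ hL]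
  refine integral_mono_measure (autocorrelation_mono h) (ae_of_all _ fun z => by positivity) ?_
  refine Integrable.const_mul (.of_bound (by fun_prop) 1 (ae_of_all _ fun z => ?_)) _
  rw [Real.norm_of_nonneg (Real.exp_pos _).le, Real.exp_le_one_iff, neg_nonpos]
  positivity

/-! ### Measures of slow growth -/

theorem lintegral_Ioo_ofReal_rpow {p b : ℝ} (hp : -1 < p) (hb : 0 ≤ b) :
    ∫⁻ u in Ioo 0 b, ENNReal.ofReal (u ^ p) = ENNReal.ofReal (b ^ (p + 1) / (p + 1)) := by
  have hint : IntegrableOn (fun u : ℝ => u ^ p) (Ioo 0 b) :=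
    ((intervalIntegral.intervalIntegrable_rpow' hp).1).mono_set Ioo_subset_Ioc_self
  rw [← ofReal_integral_eq_lintegral_ofReal hint (ae_restrict_of_forall_mem measurableSet_Ioo
      fun u hu => Real.rpow_nonneg hu.1.le p),
    ← integral_Ioc_eq_integral_Ioo, ← intervalIntegral.integral_of_le hb,
    integral_rpow (Or.inl hp), Real.zero_rpow (by linarith), sub_zero]

theorem exp_neg_sq_div_sq_le {x T : ℝ} (hT : 0 < T) (hx : T ≤ x) :
    Real.exp (-(x ^ 2 / T ^ 2)) ≤ T * x ^ (-1 : ℝ) := by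
  have hxT : 1 ≤ x / T := (one_le_div hT).mpr hx
  rw [Real.exp_neg, ← div_pow, Real.rpow_neg_one, ← div_eq_mul_inv, ← inv_div x T]
  generalize x / T = y at hxT ⊢
  exact inv_anti₀ (by linarith) (by nlinarith [Real.add_one_le_exp (y ^ 2)])

section SlowGrowth

variable {W : Type*} [NormedAddCommGroup W] [MeasurableSpace W] [OpensMeasurableSpace W]
  [ProperSpace W] {m : Measure W} [IsLocallyFiniteMeasure m] {C R T ε a : ℝ}

theorem measure_lt_norm_inv_mul_rpow_le (hR : 0 < R)
    (hm : ∀ u, R ≤ u → m.real (closedBall 0 u) ≤ C * u ^ ε) {u : ℝ} (hu : 0 < u) :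
    m.restrict (closedBall 0 R)ᶜ {ξ | u < ‖ξ‖⁻¹} * ENNReal.ofReal (u ^ (a - 1)) ≤
      (Ioo 0 R⁻¹).indicator (fun u => ENNReal.ofReal C * ENNReal.ofReal (u ^ (a - ε - 1))) u := by
  have hball : {ξ : W | u < ‖ξ‖⁻¹} ⊆ closedBall 0 u⁻¹ := fun ξ hξ =>
    mem_closedBall_zero_iff.mpr (by simpa using inv_anti₀ hu (le_of_lt hξ))
  by_cases huR : u < R⁻¹
  · rw [indicator_of_mem (show u ∈ Ioo 0 R⁻¹ from ⟨hu, huR⟩)]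
    calc m.restrict (closedBall 0 R)ᶜ {ξ | u < ‖ξ‖⁻¹} * ENNReal.ofReal (u ^ (a - 1))
        ≤ ENNReal.ofReal (C * u⁻¹ ^ ε) * ENNReal.ofReal (u ^ (a - 1)) := by
          gcongr
          refine ((Measure.restrict_apply_le _ _).trans (measure_mono hball)).trans ?_
          rw [← ofReal_measureReal measure_closedBall_lt_top.ne]
          exact ENNReal.ofReal_le_ofReal (hm _ ((le_inv_comm₀ hR hu).mpr huR.le))
      _ = ENNReal.ofReal C * ENNReal.ofReal (u ^ (a - ε - 1)) := by
          rw [ENNReal.ofReal_mul' (by positivity), mul_assoc, ← ENNReal.ofReal_mul (by positivity),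
            Real.inv_rpow hu.le, ← Real.rpow_neg hu.le, ← Real.rpow_add hu]
          ring_nf
  · have hsub : closedBall (0 : W) u⁻¹ ⊆ closedBall 0 R :=
      closedBall_subset_closedBall (inv_le_of_inv_le₀ hR (not_lt.mp huR))
    have hzero : m.restrict (closedBall 0 R)ᶜ {ξ | u < ‖ξ‖⁻¹} = 0 := by
      refine measure_mono_null (hball.trans hsub) ?_
      rw [Measure.restrict_apply measurableSet_closedBall, inter_compl_self, measure_empty]
    rw [hzero, zero_mul]
    exact zero_le

theorem lintegral_compl_closedBall_norm_rpow_neg_le (hR : 0 < R) (ha : 0 < a) (hεa : ε < a)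
    (hm : ∀ u, R ≤ u → m.real (closedBall 0 u) ≤ C * u ^ ε) :
    ∫⁻ ξ in (closedBall 0 R)ᶜ, ENNReal.ofReal (‖ξ‖ ^ (-a)) ∂m ≤
      ENNReal.ofReal (a / (a - ε) * C * R ^ (ε - a)) := by
  calc ∫⁻ ξ in (closedBall 0 R)ᶜ, ENNReal.ofReal (‖ξ‖ ^ (-a)) ∂m
      = ∫⁻ ξ in (closedBall 0 R)ᶜ, ENNReal.ofReal (‖ξ‖⁻¹ ^ a) ∂m := by
        simp_rw [Real.inv_rpow (norm_nonneg _), Real.rpow_neg (norm_nonneg _)]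
    _ = ENNReal.ofReal a * ∫⁻ u in Ioi 0,
          m.restrict (closedBall 0 R)ᶜ {ξ | u < ‖ξ‖⁻¹} * ENNReal.ofReal (u ^ (a - 1)) :=
        lintegral_rpow_eq_lintegral_meas_lt_mul _ (ae_of_all _ fun ξ => by positivity)
          (by fun_prop) ha
    _ ≤ ENNReal.ofReal a * ∫⁻ u in Ioo 0 R⁻¹,
          ENNReal.ofReal C * ENNReal.ofReal (u ^ (a - ε - 1)) := by
        rw [← lintegral_indicator measurableSet_Ioo]
        gcongr ENNReal.ofReal a * ?_
        exact (setLIntegral_mono' measurableSet_Ioi fun u hu =>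
          measure_lt_norm_inv_mul_rpow_le hR hm hu).trans (setLIntegral_le_lintegral _ _)
    _ = ENNReal.ofReal (a / (a - ε) * C * R ^ (ε - a)) := by
        have := sub_pos.mpr hεa
        rw [lintegral_const_mul _ (by fun_prop), lintegral_Ioo_ofReal_rpow (by linarith)
            (by positivity), sub_add_cancel, Real.inv_rpow hR.le, ← Real.rpow_neg hR.le, neg_sub,
          mul_left_comm, ← ENNReal.ofReal_mul ha.le, ← ENNReal.ofReal_mul' (by positivity)]
        ring_nf

theorem integrableOn_compl_closedBall_norm_rpow_neg (hR : 0 < R) (ha : 0 < a) (hεa : ε < a)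
    (hm : ∀ u, R ≤ u → m.real (closedBall 0 u) ≤ C * u ^ ε) :
    IntegrableOn (fun ξ => ‖ξ‖ ^ (-a)) (closedBall 0 R)ᶜ m := by
  refine (lintegral_ofReal_ne_top_iff_integrable (Measurable.aestronglyMeasurable (by fun_prop))
    (ae_of_all _ fun ξ => by positivity)).mp ?_
  exact ne_top_of_le_ne_top ENNReal.ofReal_ne_top
    (lintegral_compl_closedBall_norm_rpow_neg_le hR ha hεa hm)

theorem integral_compl_closedBall_norm_rpow_neg_le (hR : 0 < R) (ha : 0 < a) (hεa : ε < a)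
    (hm : ∀ u, R ≤ u → m.real (closedBall 0 u) ≤ C * u ^ ε) :
    ∫ ξ in (closedBall 0 R)ᶜ, ‖ξ‖ ^ (-a) ∂m ≤ a / (a - ε) * C * R ^ (ε - a) := by
  have := sub_pos.mpr hεa
  have hC : 0 ≤ C := nonneg_of_mul_nonneg_left (measureReal_nonneg.trans (hm R le_rfl))
    (Real.rpow_pos_of_pos hR ε)
  rw [integral_eq_lintegral_of_nonneg_ae (ae_of_all _ fun ξ => by positivity)
    (Measurable.aestronglyMeasurable (by fun_prop))]
  exact ENNReal.toReal_le_of_le_ofReal (by positivity)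
    (lintegral_compl_closedBall_norm_rpow_neg_le hR ha hεa hm)

theorem measureReal_closedBall_le_integral_exp (hT : 0 < T)
    (hint : Integrable (fun ξ => Real.exp (-(‖ξ‖ ^ 2 / T ^ 2))) m) :
    m.real (closedBall 0 T) ≤ Real.exp 1 * ∫ ξ, Real.exp (-(‖ξ‖ ^ 2 / T ^ 2)) ∂m := by
  calc m.real (closedBall 0 T) = ∫ _ in closedBall 0 T, (1 : ℝ) ∂m :=
        setIntegral_one_eq_measureReal.symm
    _ ≤ ∫ ξ in closedBall 0 T, Real.exp 1 * Real.exp (-(‖ξ‖ ^ 2 / T ^ 2)) ∂m := by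
        refine setIntegral_mono_on (integrableOn_const measure_closedBall_lt_top.ne)
          (hint.const_mul _).integrableOn measurableSet_closedBall fun ξ hξ => ?_
        rw [← Real.exp_add, Real.one_le_exp_iff, ← sub_eq_add_neg, sub_nonneg, ← div_pow]
        exact pow_le_one₀ (by positivity) ((div_le_one hT).mpr (mem_closedBall_zero_iff.mp hξ))
    _ ≤ Real.exp 1 * ∫ ξ, Real.exp (-(‖ξ‖ ^ 2 / T ^ 2)) ∂m := by
        rw [integral_const_mul]
        gcongr Real.exp 1 * ?_
        exact setIntegral_le_integral hint (ae_of_all _ fun ξ => (Real.exp_pos _).le)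

theorem integral_compl_closedBall_exp_neg_norm_sq_div_sq_le (hT : 0 < T) (hε : ε ≤ 1 / 2)
    (hint : Integrable (fun ξ => Real.exp (-(‖ξ‖ ^ 2 / T ^ 2))) m)
    (hm : ∀ u, T ≤ u → m.real (closedBall 0 u) ≤ C * u ^ ε) :
    ∫ ξ in (closedBall 0 T)ᶜ, Real.exp (-(‖ξ‖ ^ 2 / T ^ 2)) ∂m ≤ 2 * C * T ^ ε := by
  have hC : 0 ≤ C := nonneg_of_mul_nonneg_left (measureReal_nonneg.trans (hm T le_rfl))
    (Real.rpow_pos_of_pos hT ε)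
  have hε1 : ε < 1 := by linarith
  calc ∫ ξ in (closedBall 0 T)ᶜ, Real.exp (-(‖ξ‖ ^ 2 / T ^ 2)) ∂m
      ≤ ∫ ξ in (closedBall 0 T)ᶜ, T * ‖ξ‖ ^ (-1 : ℝ) ∂m := by
        refine setIntegral_mono_on hint.integrableOn
          ((integrableOn_compl_closedBall_norm_rpow_neg hT one_pos hε1 hm).const_mul T)
          measurableSet_closedBall.compl fun ξ hξ => exp_neg_sq_div_sq_le hT ?_
        exact (not_le.mp fun h => hξ (mem_closedBall_zero_iff.mpr h)).le
    _ ≤ T * (1 / (1 - ε) * C * T ^ (ε - 1)) := by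
        rw [integral_const_mul]
        gcongr
        exact integral_compl_closedBall_norm_rpow_neg_le hT one_pos hε1 hm
    _ = 1 / (1 - ε) * C * T ^ ε := by
        rw [Real.rpow_sub_one hT.ne']
        field_simp
    _ ≤ 2 * C * T ^ ε := by
        gcongr
        rw [div_le_iff₀ (by linarith)]
        linarith

theorem integral_exp_neg_norm_sq_div_sq_le (hT : 0 < T) (hε : ε ≤ 1 / 2)
    (hint : Integrable (fun ξ => Real.exp (-(‖ξ‖ ^ 2 / T ^ 2))) m)
    (hm : ∀ u, T ≤ u → m.real (closedBall 0 u) ≤ C * u ^ ε) :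
    ∫ ξ, Real.exp (-(‖ξ‖ ^ 2 / T ^ 2)) ∂m ≤ 3 * C * T ^ ε := by
  have hinside : ∫ ξ in closedBall 0 T, Real.exp (-(‖ξ‖ ^ 2 / T ^ 2)) ∂m ≤ C * T ^ ε := by
    refine le_trans ?_ (hm T le_rfl)
    rw [← setIntegral_one_eq_measureReal]
    exact setIntegral_mono hint.integrableOn (integrableOn_const measure_closedBall_lt_top.ne)
      fun ξ => Real.exp_le_one_iff.mpr (neg_nonpos.mpr (by positivity))
  have houtside := integral_compl_closedBall_exp_neg_norm_sq_div_sq_le hT hε hint hm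
  rw [← integral_add_compl measurableSet_closedBall hint]
  linarith

theorem integral_compl_closedBall_rpow_neg_half_mul_norm_rpow_neg_half_le {M t : ℝ} (hM : 1 ≤ M)
    (ht : 0 < t) (hε : ε ≤ 1 / 4)
    (hm : ∀ u, M / t ≤ u → m.real (closedBall 0 u) ≤ C * u ^ ε) :
    ∫ ξ in (closedBall 0 (M / t))ᶜ, t ^ (-(1 / 2) : ℝ) * ‖ξ‖ ^ (-(1 / 2) : ℝ) ∂m ≤
      2 * C * M ^ (-(1 / 4) : ℝ) * (1 / t) ^ ε := by
  have hM0 : 0 < M := one_pos.trans_le hM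
  have hR : 0 < M / t := by positivity
  have hC : 0 ≤ C := nonneg_of_mul_nonneg_left (measureReal_nonneg.trans (hm _ le_rfl))
    (Real.rpow_pos_of_pos hR ε)
  calc ∫ ξ in (closedBall 0 (M / t))ᶜ, t ^ (-(1 / 2) : ℝ) * ‖ξ‖ ^ (-(1 / 2) : ℝ) ∂m
      ≤ t ^ (-(1 / 2) : ℝ) * (1 / 2 / (1 / 2 - ε) * C * (M / t) ^ (ε - 1 / 2)) := by
        rw [integral_const_mul]
        gcongr
        exact integral_compl_closedBall_norm_rpow_neg_le hR (by norm_num) (by linarith) hm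
    _ = 1 / 2 / (1 / 2 - ε) * C * M ^ (ε - 1 / 2) * (1 / t) ^ ε := by
        rw [Real.div_rpow hM0.le ht.le, Real.div_rpow zero_le_one ht.le, Real.one_rpow,
          Real.rpow_sub ht, Real.rpow_neg ht.le]
        field_simp
    _ ≤ 2 * C * M ^ (-(1 / 4) : ℝ) * (1 / t) ^ ε := by
        gcongr
        · rw [div_le_iff₀ (by linarith)]
          linarith
        · linarith

end SlowGrowth

theorem three_halves_mul_measureReal_le {X : Type*} [MeasurableSpace X]
    {m : Measure X} {f g : X → ℝ} {s t : Set X} (hs : MeasurableSet s)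
    (ht : MeasurableSet t) (hst : s ⊆ t) (htm : m t ≠ ∞) (hf : Integrable f m)
    (hf0 : ∫ ξ, f ξ ∂m = 0) (hg : IntegrableOn g tᶜ m) (hfs : ∀ ξ ∈ s, 1 / 2 ≤ f ξ)
    (hft : ∀ ξ ∈ t, -1 ≤ f ξ) (hfg : ∀ ξ ∈ tᶜ, -g ξ ≤ f ξ) :
    3 / 2 * m.real s ≤ m.real t + ∫ ξ in tᶜ, g ξ ∂m := by
  have hfin : m (t \ s) ≠ ∞ := measure_ne_top_of_subset sdiff_subset htm
  have houter : -∫ ξ in tᶜ, g ξ ∂m ≤ ∫ ξ in tᶜ, f ξ ∂m := by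
    rw [← integral_neg]
    exact setIntegral_mono_on hg.neg hf.integrableOn ht.compl hfg
  have hinner : 1 / 2 * m.real s ≤ ∫ ξ in s, f ξ ∂m :=
    setIntegral_ge_of_const_le_real hs (measure_ne_top_of_subset hst htm) hfs hf.integrableOn
  have hmid : -1 * m.real (t \ s) ≤ ∫ ξ in t \ s, f ξ ∂m :=
    setIntegral_ge_of_const_le_real (ht.diff hs) hfin (fun ξ hξ => hft ξ hξ.1) hf.integrableOn
  have hsplit : ∫ ξ in s, f ξ ∂m + ∫ ξ in t \ s, f ξ ∂m + ∫ ξ in tᶜ, f ξ ∂m = 0 := by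
    rw [← setIntegral_union disjoint_sdiff_right (ht.diff hs) hf.integrableOn hf.integrableOn,
      union_sdiff_cancel hst, integral_add_compl ht hf, hf0]
  have hdiff := measureReal_sdiff hst hs htm
  linarith

/-! ### Growth of the energy at a missed distance -/

theorem measureReal_fourierEnergy_closedBall_le {ν μ : Measure V} [IsFiniteMeasure ν]
    [IsFiniteMeasure μ] (h : ν ≤ μ) {C T ε : ℝ} (hT : 0 < T) (hε : ε ≤ 1 / 2)
    (hμ : ∀ u, T ≤ u → (fourierEnergy μ).real (closedBall 0 u) ≤ C * u ^ ε) :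
    (fourierEnergy ν).real (closedBall 0 T) ≤ 3 * Real.exp 1 * C * T ^ ε := by
  have hT2 : 0 < T ^ 2 := by positivity
  have hgauss := integrable_exp_neg_norm_sq_div (V := V) hT2
  calc (fourierEnergy ν).real (closedBall 0 T)
      ≤ Real.exp 1 * ∫ ξ, Real.exp (-(‖ξ‖ ^ 2 / T ^ 2)) ∂fourierEnergy ν :=
        measureReal_closedBall_le_integral_exp hT (integrable_fourierEnergy_of_integrable hgauss)
    _ ≤ Real.exp 1 * ∫ ξ, Real.exp (-(‖ξ‖ ^ 2 / T ^ 2)) ∂fourierEnergy μ := by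
        gcongr Real.exp 1 * ?_
        exact integral_exp_neg_norm_sq_div_fourierEnergy_mono h hT2
    _ ≤ Real.exp 1 * (3 * C * T ^ ε) := by
        gcongr
        exact integral_exp_neg_norm_sq_div_sq_le hT hε
          (integrable_fourierEnergy_of_integrable hgauss) hμ
    _ = 3 * Real.exp 1 * C * T ^ ε := by ring

theorem integral_charFun_sphereMeasure_fourierEnergy_eq_zero [Nontrivial V] {ν : Measure V}
    [IsFiniteMeasure ν] {K : Set V} (hK : IsCompact K) (hνK : ∀ᵐ x ∂ν, x ∈ K) {t : ℝ} (ht : 0 ≤ t)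
    (hmiss : ∀ x ∈ K, ∀ y ∈ K, dist x y ≠ t)
    (hint : Integrable (fun ξ => charFun (sphereMeasure V) (t • ξ)) (fourierEnergy ν)) :
    ∫ ξ, charFun (sphereMeasure V) (t • ξ) ∂fourierEnergy ν = 0 := by
  obtain ⟨r, hr, hsep⟩ := exists_pos_forall_le_abs_dist_sub hK hmiss
  let σt : Measure V := (sphereMeasure V).map (t • ·)
  have hcharFun : charFun (autocorrelation ν ∗ σt) =
      fun ξ => ‖charFun ν ξ‖ ^ 2 • charFun (sphereMeasure V) (t • ξ) := by
    ext ξ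
    rw [charFun_conv, charFun_autocorrelation, charFun_map_smul, Complex.real_smul]
  have hfst : ∀ᵐ z ∂autocorrelation ν, r ≤ |‖z‖ - t| :=
    ae_autocorrelation (measurableSet_le (by fun_prop) (by fun_prop)) hνK fun x hx y hy => by
      rw [← dist_eq_norm]; exact hsep x hx y hy
  have hsnd : ∀ᵐ z ∂σt, ‖z‖ = t := by
    refine (ae_map_iff (by fun_prop) (measurableSet_eq_fun (by fun_prop) (by fun_prop))).mpr ?_
    filter_upwards [ae_norm_eq_one_sphereMeasure] with x hx
    rw [norm_smul, hx, mul_one, Real.norm_of_nonneg ht]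
  have hsupport : ∀ᵐ z ∂(autocorrelation ν ∗ σt), r ≤ ‖z‖ := by
    refine (ae_map_iff (by fun_prop) (measurableSet_le (by fun_prop) (by fun_prop))).mpr ?_
    filter_upwards [Measure.quasiMeasurePreserving_fst.ae hfst,
      Measure.quasiMeasurePreserving_snd.ae hsnd] with q hq₁ hq₂
    have := abs_norm_sub_norm_le q.1 (-q.2)
    rw [sub_neg_eq_add, norm_neg, hq₂] at this
    exact hq₁.trans this
  rw [integral_fourierEnergy, ← hcharFun]
  rw [integrable_fourierEnergy_iff, ← hcharFun] at hint
  exact integral_charFun_eq_zero hr hsupport hint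

theorem norm_charFun_smul_sphereMeasure_le {A t R : ℝ} (ht : 0 < t) (hR : 0 ≤ R)
    (hA : ∀ η : V, η ≠ 0 → ‖charFun (sphereMeasure V) η‖ ≤ A * ‖η‖ ^ (-(1 / 2) : ℝ)) {ξ : V}
    (hξ : ξ ∈ (closedBall 0 R)ᶜ) :
    ‖charFun (sphereMeasure V) (t • ξ)‖ ≤ A * (t ^ (-(1 / 2) : ℝ) * ‖ξ‖ ^ (-(1 / 2) : ℝ)) := by
  have hξ0 : ξ ≠ 0 := by
    rintro rfl
    exact hξ (mem_closedBall_self hR)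
  refine (hA _ (smul_ne_zero ht.ne' hξ0)).trans_eq ?_
  rw [norm_smul, Real.norm_of_nonneg ht.le, Real.mul_rpow ht.le (norm_nonneg ξ)]

theorem integrable_charFun_smul_sphereMeasure_fourierEnergy {ν : Measure V} [IsFiniteMeasure ν]
    {A D R t ε : ℝ} (hR : 0 < R) (ht : 0 < t) (hε : ε < 1 / 2)
    (hA : ∀ η : V, η ≠ 0 → ‖charFun (sphereMeasure V) η‖ ≤ A * ‖η‖ ^ (-(1 / 2) : ℝ))
    (hD : ∀ u, R ≤ u → (fourierEnergy ν).real (closedBall 0 u) ≤ D * u ^ ε) :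
    Integrable (fun ξ => charFun (sphereMeasure V) (t • ξ)) (fourierEnergy ν) := by
  have hmeas : Measurable fun ξ : V => charFun (sphereMeasure V) (t • ξ) :=
    measurable_charFun.comp (measurable_const_smul t)
  have hinside : IntegrableOn (fun ξ => charFun (sphereMeasure V) (t • ξ)) (closedBall 0 R)
      (fourierEnergy ν) :=
    Measure.integrableOn_of_bounded measure_closedBall_lt_top.ne hmeas.aestronglyMeasurable
      (ae_of_all _ fun ξ => norm_charFun_le_one (t • ξ))
  have htail := integrableOn_compl_closedBall_norm_rpow_neg hR (by norm_num) hε hD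
  have houtside : IntegrableOn (fun ξ => charFun (sphereMeasure V) (t • ξ)) (closedBall 0 R)ᶜ
      (fourierEnergy ν) :=
    ((htail.const_mul _).const_mul A).mono' hmeas.aestronglyMeasurable
      (ae_restrict_of_forall_mem measurableSet_closedBall.compl fun ξ hξ =>
        norm_charFun_smul_sphereMeasure_le ht hR.le hA hξ)
  simpa only [union_compl_self, integrableOn_univ] using hinside.union houtside

theorem three_halves_mul_fourierEnergy_le_of_dist_ne [Nontrivial V] {ν : Measure V}
    [IsFiniteMeasure ν] {K : Set V} (hK : IsCompact K) (hνK : ∀ᵐ x ∂ν, x ∈ K) {t : ℝ} (ht : 0 < t)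
    (hmiss : ∀ x ∈ K, ∀ y ∈ K, dist x y ≠ t) {A D M ε : ℝ} (hA0 : 0 ≤ A)
    (hA : ∀ η : V, η ≠ 0 → ‖charFun (sphereMeasure V) η‖ ≤ A * ‖η‖ ^ (-(1 / 2) : ℝ))
    (hM : 1 ≤ M) (hε : ε ≤ 1 / 4)
    (hD : ∀ u, M / t ≤ u → (fourierEnergy ν).real (closedBall 0 u) ≤ D * u ^ ε) :
    3 / 2 * (fourierEnergy ν).real (closedBall 0 (1 / t)) ≤
      (fourierEnergy ν).real (closedBall 0 (M / t)) +
        A * (2 * D * M ^ (-(1 / 4) : ℝ) * (1 / t) ^ ε) := by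
  have hR : 0 < M / t := by positivity
  have hε' : ε < 1 / 2 := by linarith
  have hint := integrable_charFun_smul_sphereMeasure_fourierEnergy hR ht hε' hA hD
  have hzero : ∫ ξ, (charFun (sphereMeasure V) (t • ξ)).re ∂fourierEnergy ν = 0 := by
    have h := integral_re hint
    rwa [integral_charFun_sphereMeasure_fourierEnergy_eq_zero hK hνK ht.le hmiss hint,
      map_zero] at h
  have hneg_le_re {z : ℂ} {b : ℝ} (h : ‖z‖ ≤ b) : -b ≤ z.re :=
    (abs_le.mp ((Complex.abs_re_le_norm z).trans h)).1
  have hlow : ∀ ξ ∈ closedBall (0 : V) (1 / t),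
      1 / 2 ≤ (charFun (sphereMeasure V) (t • ξ)).re := fun ξ hξ => by
    refine half_le_re_charFun_sphereMeasure ?_
    rw [norm_smul, Real.norm_of_nonneg ht.le, ← le_div_iff₀' ht]
    exact mem_closedBall_zero_iff.mp hξ
  have htail := integrableOn_compl_closedBall_norm_rpow_neg hR (by norm_num) hε' hD
  refine (three_halves_mul_measureReal_le measurableSet_closedBall measurableSet_closedBall
    (closedBall_subset_closedBall (by gcongr)) measure_closedBall_lt_top.ne hint.re hzero
    ((htail.const_mul _).const_mul A) hlow (fun ξ _ => hneg_le_re (norm_charFun_le_one (t • ξ)))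
    fun ξ hξ => hneg_le_re (norm_charFun_smul_sphereMeasure_le ht hR.le hA hξ)).trans ?_
  rw [integral_const_mul]
  gcongr
  exact integral_compl_closedBall_rpow_neg_half_mul_norm_rpow_neg_half_le hM ht hε hD

theorem five_quarters_mul_fourierEnergy_le_of_dist_ne [Nontrivial V] {ν : Measure V}
    [IsFiniteMeasure ν] {K : Set V} (hK : IsCompact K) (hνK : ∀ᵐ x ∂ν, x ∈ K) {t : ℝ} (ht : 0 < t)
    (hmiss : ∀ x ∈ K, ∀ y ∈ K, dist x y ≠ t) {A D M c ε : ℝ} (hA0 : 0 ≤ A)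
    (hA : ∀ η : V, η ≠ 0 → ‖charFun (sphereMeasure V) η‖ ≤ A * ‖η‖ ^ (-(1 / 2) : ℝ))
    (hM : 1 ≤ M) (hADM : A * (2 * D * M ^ (-(1 / 4) : ℝ)) ≤ c / 4) (hε : ε ≤ 1 / 4)
    (hD : ∀ u, M / t ≤ u → (fourierEnergy ν).real (closedBall 0 u) ≤ D * u ^ ε)
    (hc : c * (1 / t) ^ ε ≤ (fourierEnergy ν).real (closedBall 0 (1 / t))) :
    5 / 4 * (fourierEnergy ν).real (closedBall 0 (1 / t)) ≤
      (fourierEnergy ν).real (closedBall 0 (M / t)) := by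
  have h := three_halves_mul_fourierEnergy_le_of_dist_ne hK hνK ht hmiss hA0 hA hM hε hD
  have herror := mul_le_mul_of_nonneg_right hADM (by positivity : 0 ≤ (1 / t) ^ ε)
  linarith

theorem norm_charFun_sq_le_restrict_add (μ : Measure V) [IsFiniteMeasure μ] {K : Set V}
    (hK : MeasurableSet K) (ξ : V) :
    ‖charFun μ ξ‖ ^ 2 ≤ ‖charFun (μ.restrict K) ξ‖ ^ 2 + 2 * μ.real univ * μ.real Kᶜ := by
  have hint : Integrable (fun x : V => Complex.exp (⟪x, ξ⟫ * Complex.I)) μ :=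
    .of_bound (by fun_prop) 1 (ae_of_all _ fun x => (Complex.norm_exp_ofReal_mul_I _).le)
  have hsplit : charFun μ ξ = charFun (μ.restrict K) ξ + charFun (μ.restrict Kᶜ) ξ :=
    (integral_add_compl hK hint).symm
  have hdiff : ‖charFun μ ξ‖ - ‖charFun (μ.restrict K) ξ‖ ≤ μ.real Kᶜ := by
    have hcompl := norm_charFun_le (μ := μ.restrict Kᶜ) ξ
    rw [measureReal_restrict_apply_univ] at hcompl
    rw [hsplit]
    linarith [norm_add_le (charFun (μ.restrict K) ξ) (charFun (μ.restrict Kᶜ) ξ)]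
  have hle : ‖charFun μ ξ‖ ≤ μ.real univ := norm_charFun_le ξ
  have hle' : ‖charFun (μ.restrict K) ξ‖ ≤ μ.real univ := by
    refine (norm_charFun_le ξ).trans ?_
    rw [measureReal_restrict_apply_univ]
    exact measureReal_mono (subset_univ K)
  calc ‖charFun μ ξ‖ ^ 2
      = ‖charFun (μ.restrict K) ξ‖ ^ 2 + (‖charFun μ ξ‖ + ‖charFun (μ.restrict K) ξ‖) *
          (‖charFun μ ξ‖ - ‖charFun (μ.restrict K) ξ‖) := by ring
    _ ≤ ‖charFun (μ.restrict K) ξ‖ ^ 2 +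
          (‖charFun μ ξ‖ + ‖charFun (μ.restrict K) ξ‖) * μ.real Kᶜ := by
        gcongr
    _ ≤ ‖charFun (μ.restrict K) ξ‖ ^ 2 + 2 * μ.real univ * μ.real Kᶜ := by
        gcongr
        linarith

theorem measureReal_fourierEnergy_le_restrict_add (μ : Measure V) [IsFiniteMeasure μ] {K s : Set V}
    (hK : MeasurableSet K) (hs : MeasurableSet s) (hs' : Bornology.IsBounded s) :
    (fourierEnergy μ).real s ≤
      (fourierEnergy (μ.restrict K)).real s + 2 * μ.real univ * μ.real Kᶜ * volume.real s := by
  have hint (ν : Measure V) [IsFiniteMeasure ν] :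
      IntegrableOn (fun ξ => ‖charFun ν ξ‖ ^ 2) s := by
    refine Measure.integrableOn_of_bounded (M := ν.real univ ^ 2) hs'.measure_lt_top.ne
      (measurable_charFun.norm.pow_const 2).aestronglyMeasurable (ae_of_all _ fun ξ => ?_)
    rw [norm_pow, norm_norm]
    gcongr
    exact norm_charFun_le ξ
  have hconst : IntegrableOn (fun _ : V => 2 * μ.real univ * μ.real Kᶜ) s :=
    integrableOn_const hs'.measure_lt_top.ne
  rw [measureReal_fourierEnergy μ hs, measureReal_fourierEnergy _ hs,
    mul_comm _ (volume.real s), ← smul_eq_mul (volume.real s), ← setIntegral_const,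
    ← integral_add (hint _) hconst]
  exact setIntegral_mono (hint μ) ((hint _).add hconst) (norm_charFun_sq_le_restrict_add μ hK)

theorem exists_isCompact_subset_fourierEnergy_le_add (μ : Measure V) [IsFiniteMeasure μ]
    {E : Set V} (hE : MeasurableSet E) (hμE : μ Eᶜ = 0) (ρ : ℝ) {δ : ℝ} (hδ : 0 < δ) :
    ∃ K ⊆ E, IsCompact K ∧ ∀ r ≤ ρ, (fourierEnergy μ).real (closedBall 0 r) ≤
      (fourierEnergy (μ.restrict K)).real (closedBall 0 r) + δ := by
  set b := 2 * μ.real univ * volume.real (closedBall (0 : V) ρ)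
  obtain ⟨K, hKE, hK, hEK⟩ := hE.exists_isCompact_sdiff_lt (measure_ne_top μ E)
    (ENNReal.ofReal_pos.mpr (by positivity : 0 < δ / (b + 1))).ne'
  have hKc : μ.real Kᶜ ≤ δ / (b + 1) := by
    refine ENNReal.toReal_le_of_le_ofReal (by positivity) (le_trans ?_ hEK.le)
    calc μ Kᶜ ≤ μ (E \ K ∪ Eᶜ) := measure_mono fun x hx => by
          by_cases hxE : x ∈ E
          · exact Or.inl ⟨hxE, hx⟩
          · exact Or.inr hxE
      _ ≤ μ (E \ K) + μ Eᶜ := measure_union_le _ _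
      _ = μ (E \ K) := by rw [hμE, add_zero]
  refine ⟨K, hKE, hK, fun r hr => (measureReal_fourierEnergy_le_restrict_add μ hK.measurableSet
    measurableSet_closedBall isBounded_closedBall).trans ?_⟩
  gcongr
  calc 2 * μ.real univ * μ.real Kᶜ * volume.real (closedBall (0 : V) r)
      ≤ 2 * μ.real univ * (δ / (b + 1)) * volume.real (closedBall (0 : V) ρ) := by
        gcongr
        exact measure_closedBall_lt_top.ne
    _ = δ * (b / (b + 1)) := by ring
    _ ≤ δ := mul_le_of_le_one_right hδ.le ((div_le_one (by positivity)).mpr (by linarith))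

theorem pow_mul_fourierEnergy_le_of_dist_ne [Nontrivial V] {ν : Measure V} [IsFiniteMeasure ν]
    {K : Set V} (hK : IsCompact K) (hνK : ∀ᵐ x ∂ν, x ∈ K) {A D M c ε : ℝ} (hA0 : 0 ≤ A)
    (hA : ∀ η : V, η ≠ 0 → ‖charFun (sphereMeasure V) η‖ ≤ A * ‖η‖ ^ (-(1 / 2) : ℝ))
    (hM : 1 ≤ M) (hADM : A * (2 * D * M ^ (-(1 / 4) : ℝ)) ≤ c / 4) (hε : ε ≤ 1 / 4)
    (hD : ∀ T, 1 ≤ T → (fourierEnergy ν).real (closedBall 0 T) ≤ D * T ^ ε) {n : ℕ} {u : ℕ → ℝ}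
    (hu : ∀ i ≤ n, u i ∈ Ioc 0 1) (hsep : ∀ i < n, M * u (i + 1) ≤ u i)
    (hmiss : ∀ i < n, ∀ x ∈ K, ∀ y ∈ K, dist x y ≠ u i)
    (hc : ∀ i < n, c * (1 / u i) ^ ε ≤ (fourierEnergy ν).real (closedBall 0 (1 / u i))) :
    (5 / 4) ^ n * (fourierEnergy ν).real (closedBall 0 (1 / u 0)) ≤
      (fourierEnergy ν).real (closedBall 0 (1 / u n)) := by
  refine geom_le (u := fun i => (fourierEnergy ν).real (closedBall 0 (1 / u i))) (by norm_num) n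
    fun i hi => ?_
  have hui := hu i hi.le
  have hone_le : 1 ≤ M / u i := (one_le_div hui.1).mpr (hui.2.trans hM)
  refine (five_quarters_mul_fourierEnergy_le_of_dist_ne hK hνK hui.1 (hmiss i hi) hA0 hA hM hADM hε
    (fun T hT => hD T (hone_le.trans hT)) (hc i hi)).trans ?_
  refine measureReal_mono (closedBall_subset_closedBall ?_) measure_closedBall_lt_top.ne
  rw [div_le_div_iff₀ hui.1 (hu (i + 1) hi).1, one_mul]
  exact hsep i hi

theorem exists_dist_eq_of_forall_mul_le [Nontrivial V] {E : Set V} (hE : MeasurableSet E)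
    {μ : Measure V} [IsFiniteMeasure μ] (hμE : μ Eᶜ = 0) {A C M c ε : ℝ} (hA0 : 0 ≤ A)
    (hA : ∀ η : V, η ≠ 0 → ‖charFun (sphereMeasure V) η‖ ≤ A * ‖η‖ ^ (-(1 / 2) : ℝ))
    (hc : 0 < c) (hM : 1 ≤ M)
    (hACM : A * (2 * (3 * Real.exp 1 * C) * M ^ (-(1 / 4) : ℝ)) ≤ c / 2 / 4)
    (hε0 : 0 ≤ ε) (hε : ε ≤ 1 / 4)
    (hμ : ∀ T, 1 ≤ T → c * T ^ ε ≤ (fourierEnergy μ).real (closedBall 0 T) ∧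
      (fourierEnergy μ).real (closedBall 0 T) ≤ C * T ^ ε)
    {n : ℕ} {u : ℕ → ℝ} (hu : ∀ i ≤ n, u i ∈ Ioc 0 1) (hsep : ∀ i < n, M * u (i + 1) ≤ u i)
    (hn : 3 * Real.exp 1 * C * (1 / u n) ^ ε < (5 / 4) ^ n * (c / 2 * (1 / u 0) ^ ε)) :
    ∃ i < n, ∃ x ∈ E, ∃ y ∈ E, dist x y = u i := by
  by_contra! hmiss
  obtain ⟨K, hKE, hK, hKμ⟩ :=
    exists_isCompact_subset_fourierEnergy_le_add μ hE hμE (1 / u n) (half_pos hc)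
  have hupper (T : ℝ) (hT : 1 ≤ T) :
      (fourierEnergy (μ.restrict K)).real (closedBall 0 T) ≤ 3 * Real.exp 1 * C * T ^ ε :=
    measureReal_fourierEnergy_closedBall_le Measure.restrict_le_self (one_pos.trans_le hT)
      (by linarith) fun r hr => (hμ r (hT.trans hr)).2
  have hanti (i : ℕ) (hi : i ≤ n) : u n ≤ u i := by
    refine Nat.decreasingInduction' (P := fun k => u n ≤ u k) (fun k hk _ hle => ?_) hi le_rfl
    exact hle.trans (le_trans (le_mul_of_one_le_left (hu (k + 1) hk).1.le hM) (hsep k hk))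
  have hlower (i : ℕ) (hi : i ≤ n) : c / 2 * (1 / u i) ^ ε ≤
      (fourierEnergy (μ.restrict K)).real (closedBall 0 (1 / u i)) := by
    have hr : 1 ≤ 1 / u i := (one_le_div (hu i hi).1).mpr (hu i hi).2
    have hrestrict := hKμ (1 / u i)
      (one_div_le_one_div_of_le (hu n le_rfl).1 (hanti i hi))
    linarith [(hμ (1 / u i) hr).1,
      le_mul_of_one_le_right (half_pos hc).le (Real.one_le_rpow hr hε0)]
  have hgrowth := pow_mul_fourierEnergy_le_of_dist_ne hK (ae_restrict_mem hK.measurableSet) hA0 hA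
    hM hACM hε hupper hu hsep (fun i hi x hx y hy => hmiss i hi x (hKE hx) y (hKE hy))
    fun i hi => hlower i hi.le
  have hlast := hupper (1 / u n) ((one_le_div (hu n le_rfl).1).mpr (hu n le_rfl).2)
  have hfirst := mul_le_mul_of_nonneg_left (hlower 0 n.zero_le)
    (by positivity : 0 ≤ (5 / 4 : ℝ) ^ n)
  exact (hn.trans_le (hfirst.trans (hgrowth.trans hlast))).false

/-! ### Lacunary sequences -/

theorem exists_one_le_mul_rpow_neg_le (a : ℝ) {p δ : ℝ} (hp : 0 < p) (hδ : 0 < δ) :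
    ∃ M : ℝ, 1 ≤ M ∧ a * M ^ (-p) ≤ δ := by
  have hlim : Tendsto (fun M : ℝ => a * M ^ (-p)) atTop (𝓝 0) := by
    simpa using (tendsto_rpow_neg_atTop hp).const_mul a
  exact ((eventually_ge_atTop 1).and (hlim.eventually_le_const hδ)).exists

theorem exists_mem_Ioc_forall_rpow_le_two {b δ : ℝ} (hb : 0 < b) (hδ : 0 < δ) :
    ∃ ε₀ ∈ Ioc 0 δ, ∀ ε, 0 ≤ ε → ε < ε₀ → b ^ ε ≤ 2 := by
  have hlim : Tendsto (fun ε : ℝ => b ^ ε) (𝓝 0) (𝓝 1) := by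
    simpa using (Real.continuousAt_const_rpow hb.ne' (b := 0)).tendsto
  obtain ⟨r, hr, hball⟩ := Metric.eventually_nhds_iff.mp (hlim.eventually_le_const one_lt_two)
  refine ⟨min r δ, ⟨lt_min hr hδ, min_le_right _ _⟩, fun ε hε0 hε => hball ?_⟩
  rw [Real.dist_0_eq_abs, abs_of_nonneg hε0]
  exact hε.trans_le (min_le_left _ _)

section Lacunary

variable {t : ℕ → ℝ} {J : ℕ} {τ : ℝ}

theorem le_pow_mul_of_div_le (ht : ∀ j < J, 0 < t j) (hτ : 0 ≤ τ)
    (h : ∀ j, j + 1 < J → t (j + 1) / t j ≤ τ) {i k : ℕ} (hik : i + k < J) :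
    t (i + k) ≤ τ ^ k * t i :=
  le_geom (u := fun k => t (i + k)) hτ k fun l hl =>
    (div_le_iff₀ (ht _ (by omega))).mp (h (i + l) (by omega))

theorem pow_mul_le_of_le_div (ht : ∀ j < J, 0 < t j) (hτ : 0 ≤ τ)
    (h : ∀ j, j + 1 < J → τ ≤ t (j + 1) / t j) {i k : ℕ} (hik : i + k < J) :
    τ ^ k * t i ≤ t (i + k) :=
  geom_le (u := fun k => t (i + k)) hτ k fun l hl =>
    (le_div_iff₀ (ht _ (by omega))).mp (h (i + l) (by omega))

end Lacunary

theorem exists_dist_eq_of_lacunary [Nontrivial V] {E : Set V} (hE : MeasurableSet E)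
    {μ : Measure V} [IsFiniteMeasure μ] (hμE : μ Eᶜ = 0) {A C M c ε τ₁ τ₂ : ℝ} (hA0 : 0 ≤ A)
    (hA : ∀ η : V, η ≠ 0 → ‖charFun (sphereMeasure V) η‖ ≤ A * ‖η‖ ^ (-(1 / 2) : ℝ))
    (hc : 0 < c) (hM : 1 ≤ M)
    (hACM : A * (2 * (3 * Real.exp 1 * C) * M ^ (-(1 / 4) : ℝ)) ≤ c / 2 / 4)
    (hε0 : 0 ≤ ε) (hε : ε ≤ 1 / 4)
    (hμ : ∀ T, 1 ≤ T → c * T ^ ε ≤ (fourierEnergy μ).real (closedBall 0 T) ∧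
      (fourierEnergy μ).real (closedBall 0 T) ≤ C * T ^ ε)
    (hτ₁ : 0 < τ₁) (hττ : τ₁ ≤ τ₂) {n N : ℕ} (hN : M * τ₂ ^ N ≤ 1)
    (hn : 3 * Real.exp 1 * C * 2 < (5 / 4) ^ n * (c / 2))
    (hrpow : (τ₁ ^ (n * N))⁻¹ ^ ε ≤ 2) {t : ℕ → ℝ} (ht : ∀ j < n * N + 1, t j ∈ Ioc 0 1)
    (hlac : ∀ j, j + 1 < n * N + 1 → τ₁ ≤ t (j + 1) / t j ∧ t (j + 1) / t j ≤ τ₂) :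
    ∃ j < n * N + 1, ∃ x ∈ E, ∃ y ∈ E, dist x y = t j := by
  have htpos (j : ℕ) (hj : j < n * N + 1) : 0 < t j := (ht j hj).1
  have hindex (i : ℕ) (hi : i ≤ n) : i * N < n * N + 1 :=
    Nat.lt_succ_of_le (Nat.mul_le_mul_right N hi)
  have hsep (i : ℕ) (hi : i < n) : M * t ((i + 1) * N) ≤ t (i * N) := by
    have hlt := hindex (i + 1) hi
    rw [Nat.succ_mul] at hlt ⊢
    calc M * t (i * N + N) ≤ M * (τ₂ ^ N * t (i * N)) := by
          gcongr
          exact le_pow_mul_of_div_le htpos (hτ₁.le.trans hττ) (fun j hj => (hlac j hj).2) hlt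
      _ = M * τ₂ ^ N * t (i * N) := (mul_assoc ..).symm
      _ ≤ t (i * N) := mul_le_of_le_one_left (htpos _ (hindex i hi.le)).le hN
  have ht0 : 0 < t 0 := htpos 0 (Nat.succ_pos _)
  have hratio : (1 / t (n * N)) ^ ε ≤ 2 * (1 / t 0) ^ ε := by
    have hspan : τ₁ ^ (n * N) * t 0 ≤ t (n * N) := by
      simpa using pow_mul_le_of_le_div htpos hτ₁.le (fun j hj => (hlac j hj).1)
        (i := 0) (k := n * N) (by omega)
    calc (1 / t (n * N)) ^ ε ≤ (1 / (τ₁ ^ (n * N) * t 0)) ^ ε := by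
          have := htpos (n * N) (hindex n le_rfl)
          gcongr
      _ = (τ₁ ^ (n * N))⁻¹ ^ ε * (1 / t 0) ^ ε := by
          rw [one_div, mul_inv, Real.mul_rpow (by positivity) (by positivity), one_div]
      _ ≤ 2 * (1 / t 0) ^ ε := by gcongr
  have hcC : c ≤ C := by simpa using (hμ 1 le_rfl).1.trans (hμ 1 le_rfl).2
  obtain ⟨i, hi, hdist⟩ := exists_dist_eq_of_forall_mul_le (n := n) (u := fun i => t (i * N)) hE hμE
    hA0 hA hc hM hACM hε0 hε hμ (fun i hi => ht _ (hindex i hi)) hsep <| by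
      have hC : 0 ≤ C := hc.le.trans hcC
      calc 3 * Real.exp 1 * C * (1 / t (n * N)) ^ ε
          ≤ 3 * Real.exp 1 * C * (2 * (1 / t 0) ^ ε) := by gcongr
        _ = 3 * Real.exp 1 * C * 2 * (1 / t 0) ^ ε := by ring
        _ < (5 / 4) ^ n * (c / 2) * (1 / t 0) ^ ε := by gcongr
        _ = (5 / 4) ^ n * (c / 2 * (1 / t (0 * N)) ^ ε) := by rw [zero_mul, mul_assoc]
  exact ⟨i * N, hindex i hi.le, hdist⟩

theorem statement10_general (hV : 2 ≤ Module.finrank ℝ V) {c : ℝ} (hc : 0 < c) (C : ℝ)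
    {τ₁ τ₂ : ℝ} (hτ₁ : 0 < τ₁) (hττ : τ₁ ≤ τ₂) (hτ₂ : τ₂ < 1) :
    ∃ (ε₀ : ℝ) (J₀ : ℕ), ε₀ ∈ Ioo (0 : ℝ) 1 ∧ 0 < J₀ ∧ ∀ ε, 0 ≤ ε → ε < ε₀ →
      ∀ E : Set V, MeasurableSet E → ∀ μ : Measure V, IsFiniteMeasure μ → μ Eᶜ = 0 →
      (∀ T, 1 ≤ T → c * T ^ ε ≤ (fourierEnergy μ).real (closedBall 0 T) ∧
        (fourierEnergy μ).real (closedBall 0 T) ≤ C * T ^ ε) →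
      ∀ t : ℕ → ℝ, (∀ j < J₀, t j ∈ Ioc 0 1) →
      (∀ j, j + 1 < J₀ → τ₁ ≤ t (j + 1) / t j ∧ t (j + 1) / t j ≤ τ₂) →
      ∃ j < J₀, ∃ x ∈ E, ∃ y ∈ E, dist x y = t j := by
  have : Nontrivial V := Module.nontrivial_of_finrank_pos (R := ℝ) (by omega)
  obtain ⟨A, hA0, hA⟩ := exists_norm_charFun_sphereMeasure_le hV
  obtain ⟨M, hM, hACM⟩ := exists_one_le_mul_rpow_neg_le (A * (2 * (3 * Real.exp 1 * C)))
    (by norm_num : (0 : ℝ) < 1 / 4) (by positivity : 0 < c / 2 / 4)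
  have hM0 : 0 < M := one_pos.trans_le hM
  obtain ⟨N, hN⟩ := exists_pow_lt_of_lt_one (inv_pos.mpr hM0) hτ₂
  have hN' : M * τ₂ ^ N ≤ 1 := (mul_le_mul_of_nonneg_left hN.le hM0.le).trans_eq (by field_simp)
  obtain ⟨n, hn⟩ := pow_unbounded_of_one_lt (3 * Real.exp 1 * C * 2 / (c / 2))
    (by norm_num : (1 : ℝ) < 5 / 4)
  obtain ⟨ε₀, hε₀, hrpow⟩ := exists_mem_Ioc_forall_rpow_le_two
    (inv_pos.mpr (pow_pos hτ₁ (n * N))) (by norm_num : (0 : ℝ) < 1 / 4)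
  refine ⟨ε₀, n * N + 1, ⟨hε₀.1, by linarith [hε₀.2]⟩, Nat.succ_pos _, ?_⟩
  intro ε hε0 hε E hE μ _ hμE hμ t ht hlac
  exact exists_dist_eq_of_lacunary hE hμE hA0 hA hc hM (by simpa only [mul_assoc] using hACM) hε0
    (hε.le.trans hε₀.2) hμ hτ₁ hττ hN' ((div_lt_iff₀ (half_pos hc)).mp hn) (hrpow ε hε0 hε) ht hlac

end

theorem FmuInt_eq_measureReal_fourierEnergy {d : ℕ} (μ : Measure (Euc d)) [SFinite μ] (T : ℝ) :
    FmuInt μ T = (fourierEnergy μ).real (closedBall 0 T) := by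
  have hball : {ξ : Euc d | ‖ξ‖ ≤ T} = closedBall 0 T := by
    ext ξ
    simp
  have hnorm (ξ : Euc d) : ‖fourierM μ ξ‖ = ‖charFun μ ξ‖ := by
    have hconj : fourierM μ ξ = charFun μ (-ξ) := by
      simp only [fourierM, charFun_apply, inner_neg_right, Complex.ofReal_neg, neg_mul,
        mul_comm Complex.I]
    rw [hconj, charFun_neg, RCLike.norm_conj]
  simp only [FmuInt, hnorm, hball, measureReal_fourierEnergy μ measurableSet_closedBall]

/-- Theorem 1.13: given `d ≥ 2`, `C₀ ≥ 1` and `0 < τ₁ ≤ τ₂ < 1`, there exist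
`ε₀ ∈ (0,1)` and `J₀ ∈ ℕ` such that for `s ∈ (d - ε₀, d)`, every quasi-regular Borel
set `E ⊆ [0,1]^d` carrying a locally uniformly `s`-dimensional probability measure
with `C₀⁻¹ T^{d-s} ≤ F_μ(T) ≤ C₀ T^{d-s}` (T ≥ 1) has the property that `Δ(E)` meets
every `(τ₁,τ₂)`-lacunary sequence `t_1,…,t_{J₀} ⊆ (0,1]`. -/
theorem statement10 (d : ℕ) (hd : 2 ≤ d) (C₀ τ₁ τ₂ : ℝ)
    (hC₀ : 1 ≤ C₀) (hτ₁ : 0 < τ₁) (hττ : τ₁ ≤ τ₂) (hτ₂ : τ₂ < 1) :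
    ∃ (ε₀ : ℝ) (J₀ : ℕ), ε₀ ∈ Ioo (0:ℝ) 1 ∧ 0 < J₀ ∧
      ∀ s : ℝ, (d : ℝ) - ε₀ < s → s < d →
      ∀ E : Set (Euc d), MeasurableSet E → E ⊆ unitCube d → QuasiRegular E s →
      ∀ μ : Measure (Euc d), IsProbabilityMeasure μ → μ Eᶜ = 0 →
        LocallyUniformlyDim μ s →
        (∀ T : ℝ, 1 ≤ T →
          C₀⁻¹ * T ^ ((d : ℝ) - s) ≤ FmuInt μ T ∧ FmuInt μ T ≤ C₀ * T ^ ((d : ℝ) - s)) →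
        ∀ t : ℕ → ℝ, (∀ j < J₀, t j ∈ Ioc (0:ℝ) 1) →
          (∀ j : ℕ, j + 1 < J₀ → τ₁ ≤ t (j+1) / t j ∧ t (j+1) / t j ≤ τ₂) →
          ∃ j < J₀, t j ∈ distSet E E := by
  obtain ⟨ε₀, J₀, hε₀, hJ₀, h⟩ := statement10_general (V := Euc d)
    (hd.trans_eq finrank_euclideanSpace_fin.symm) (inv_pos.mpr (one_pos.trans_le hC₀)) C₀
    hτ₁ hττ hτ₂
  refine ⟨ε₀, J₀, hε₀, hJ₀, fun s hs hsd E hE _ _ μ _ hμE _ hμ => ?_⟩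
  simp only [FmuInt_eq_measureReal_fourierEnergy] at hμ
  exact h (d - s) (by linarith) (by linarith) E hE μ inferInstance hμE hμ
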